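/- arXiv:2208.00917 — 3 statements merged into one kernel-verified Lean document; each statement's English description precedes it below -/
import Mathlib

section
/- Suppose that J is ferromagnetic and that the subgraph G_{>0} is connected. Then for every t ≥ 0, all zeros of the entire function x ↦ Z_{G,t}(x) are simple; that is, for every x ∈ ℂ with Z_{G,t}(x) = 0, the derivative Z_{G,t}′(x) ≠ 0. -/
open scoped Real

noncomputable def spin (b : Bool) : ℝ := if b then 1 else -1

noncomputable def pairProd {V : Type} (σ : V → Bool) (e : Sym2 V) : ℝ :=
  Sym2.lift ⟨fun u v => spin (σ u) * spin (σ v), fun _ _ => mul_comm _ _⟩ e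

/-- The Ising partition function `Z_{G,t}(x)` with an extra coupling `t` at the edge
`u₀v₀`, couplings `J` on the edge set `E`, and (complex) external field `i·x`. -/
noncomputable def IsingZ {V : Type} [Fintype V] [DecidableEq V]
    (E : Finset (Sym2 V)) (J : Sym2 V → ℝ) (u₀ v₀ : V) (t x : ℂ) : ℂ :=
  ∑ σ : V → Bool, Complex.exp
    (t * ((spin (σ u₀) * spin (σ v₀) : ℝ) : ℂ)
      + ((∑ e ∈ E, J e * pairProd σ e : ℝ) : ℂ)
      + Complex.I * x * ((∑ u, spin (σ u) : ℝ) : ℂ))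

open Finset Function

section BilinearForm

/-- Nonvanishing of a bi-affine polynomial on the open bidisc bounds its partial derivative. -/
lemma norm_le_of_biaffine_ne_zero {a b c d : ℂ}
    (h : ∀ z w : ℂ, ‖z‖ < 1 → ‖w‖ < 1 → d + c * z + b * w + a * z * w ≠ 0)
    {z : ℂ} (hz : ‖z‖ < 1) : ‖b + a * z‖ ≤ ‖d + c * z‖ := by
  by_contra! hlt
  have hne : b + a * z ≠ 0 := norm_pos_iff.1 ((norm_nonneg _).trans_lt hlt)
  refine h z (-(d + c * z) / (b + a * z)) hz ?_ ?_
  · rw [norm_div, norm_neg]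
    exact (div_lt_one (norm_pos_iff.2 hne)).2 hlt
  · have := div_mul_cancel₀ (-(d + c * z)) hne
    linear_combination this

lemma biaffine_damped_ne_zero_of_norm_le {a b c d : ℂ}
    (h : ∀ z w : ℂ, ‖z‖ < 1 → ‖w‖ < 1 → d + c * z + b * w + a * z * w ≠ 0)
    (hcb : ‖c‖ ≤ ‖b‖) {τ : ℝ} (h0 : 0 ≤ τ) (h1 : τ ≤ 1) {z w : ℂ} (hz : ‖z‖ < 1)
    (hw : ‖w‖ < 1) : d + τ * c * z + τ * b * w + a * z * w ≠ 0 := by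
  have hd : d ≠ 0 := by simpa using h 0 0 (by simp) (by simp)
  have hdc : ‖c‖ ≤ ‖d‖ := by
    have := norm_le_of_biaffine_ne_zero (a := a) (b := c) (c := b) (d := d)
      (fun z w hz hw => by
        have := h w z hw hz
        intro h'
        exact this (by linear_combination h')) (z := 0) (by simp)
    simpa using this
  have hp := norm_le_of_biaffine_ne_zero h hz
  have hm := norm_le_of_biaffine_ne_zero h (z := -z) (by simpa using hz)
  have hpos : d + τ * c * z ≠ 0 := by
    intro h'
    have e : ‖d‖ = τ * ‖c‖ * ‖z‖ := by
      rw [eq_neg_of_add_eq_zero_left h', norm_neg, norm_mul, norm_mul, Complex.norm_real,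
        Real.norm_of_nonneg h0]
    have hdpos := norm_pos_iff.2 hd
    have : τ * ‖c‖ ≤ ‖d‖ := by nlinarith [norm_nonneg c]
    nlinarith [norm_nonneg z]
  have key : ‖τ * b + a * z‖ ≤ ‖d + τ * c * z‖ := by
    have hcz : ‖c * z‖ ^ 2 ≤ ‖b‖ ^ 2 := by
      have : ‖c * z‖ ≤ ‖b‖ := by
        rw [norm_mul]; nlinarith [norm_nonneg c, norm_nonneg z]
      gcongr
    have hp2 := pow_le_pow_left₀ (norm_nonneg _) hp 2
    have hm2 := pow_le_pow_left₀ (norm_nonneg _) hm 2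
    refine le_of_sq_le_sq ?_ (norm_nonneg _)
    simp only [Complex.sq_norm, Complex.normSq_apply, Complex.add_re, Complex.add_im,
      Complex.mul_re, Complex.mul_im, Complex.neg_re, Complex.neg_im, Complex.ofReal_re,
      Complex.ofReal_im] at hp2 hm2 hcz ⊢
    have hτ : 0 ≤ 1 - τ ^ 2 := by nlinarith
    have e1 := mul_nonneg hτ (sub_nonneg.2 hcz)
    have e2 := mul_nonneg (by linarith : 0 ≤ (1 + τ) / 2) (sub_nonneg.2 hp2)
    have e3 := mul_nonneg (by linarith : 0 ≤ (1 - τ) / 2) (sub_nonneg.2 hm2)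
    nlinarith
  intro h'
  have e : ‖d + τ * c * z‖ = ‖τ * b + a * z‖ * ‖w‖ := by
    rw [← norm_mul, ← norm_neg]
    congr 1
    linear_combination -h'
  nlinarith [norm_pos_iff.2 hpos, norm_nonneg w]

/-- Damping the mixed coefficients preserves nonvanishing on the open bidisc. -/
lemma biaffine_damped_ne_zero {a b c d : ℂ}
    (h : ∀ z w : ℂ, ‖z‖ < 1 → ‖w‖ < 1 → d + c * z + b * w + a * z * w ≠ 0)
    {τ : ℝ} (h0 : 0 ≤ τ) (h1 : τ ≤ 1) {z w : ℂ} (hz : ‖z‖ < 1) (hw : ‖w‖ < 1) :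
    d + τ * c * z + τ * b * w + a * z * w ≠ 0 := by
  rcases le_total ‖c‖ ‖b‖ with hcb | hbc
  · exact biaffine_damped_ne_zero_of_norm_le h hcb h0 h1 hz hw
  · have := biaffine_damped_ne_zero_of_norm_le (a := a) (b := c) (c := b) (d := d)
      (fun z w hz hw h' => h w z hw hz (by linear_combination h')) hbc h0 h1 hw hz
    exact fun h' => this (by linear_combination h')

end BilinearForm

section SingleSite

/-- The single-site weight of a complex angle. -/
noncomputable def phase (x : ℂ) (b : Bool) : ℂ := Complex.exp (Complex.I * x * spin b)

lemma spin_mul_self (b : Bool) : spin b * spin b = 1 := by cases b <;> simp [spin]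

lemma spin_not (b : Bool) : spin (!b) = -spin b := by cases b <;> simp [spin]

lemma exp_I_mul_spin (r : ℂ) (b : Bool) : Complex.exp (Complex.I * (r * spin b)) =
    Complex.cos r + Complex.sin r * (Complex.I * spin b) := by
  cases b
  · have := Complex.exp_mul_I (-r)
    simp only [Complex.cos_neg, Complex.sin_neg] at this
    simp only [spin, Bool.false_eq_true, if_false]
    push_cast
    rw [show Complex.I * (r * -1) = -r * Complex.I by ring, this]
    ring
  · simp only [spin, if_true]
    push_cast
    rw [show Complex.I * (r * 1) = r * Complex.I by ring, Complex.exp_mul_I]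
    ring

lemma phase_add_quarter (x : ℂ) (b : Bool) :
    phase (x + (π / 2 : ℝ)) b = Complex.I * spin b * phase x b := by
  have h := exp_I_mul_spin ((π / 2 : ℝ) : ℂ) b
  rw [← Complex.ofReal_cos, ← Complex.ofReal_sin, Real.cos_pi_div_two, Real.sin_pi_div_two] at h
  simp only [phase]
  rw [show Complex.I * (x + ((π / 2 : ℝ) : ℂ)) * spin b =
    Complex.I * (((π / 2 : ℝ) : ℂ) * spin b) + Complex.I * x * spin b by ring, Complex.exp_add, h]
  simp

lemma norm_phase (x : ℂ) (b : Bool) : ‖phase x b‖ = Real.exp (-x.im * spin b) := by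
  simp [phase, Complex.norm_exp]

lemma norm_phase_add_smul_lt {x S : ℂ} (hx : 0 < x.im) (hS : 0 < S.im) :
    ‖(phase x + S • phase (x + (π / 2 : ℝ))) true‖ <
      ‖(phase x + S • phase (x + (π / 2 : ℝ))) false‖ := by
  have h1 : ∀ b, (phase x + S • phase (x + (π / 2 : ℝ))) b =
      (1 + Complex.I * S * spin b) * phase x b := by
    intro b
    simp only [Pi.add_apply, Pi.smul_apply, smul_eq_mul, phase_add_quarter]
    ring
  rw [h1, h1, norm_mul, norm_mul, norm_phase, norm_phase]
  have hlt : ‖1 + Complex.I * S * spin true‖ < ‖1 + Complex.I * S * spin false‖ := by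
    refine lt_of_pow_lt_pow_left₀ 2 (norm_nonneg _) ?_
    simp only [spin, Bool.false_eq_true, if_false, if_true, Complex.sq_norm,
      Complex.normSq_apply]
    simp
    nlinarith
  refine mul_lt_mul hlt ?_ (Real.exp_pos _) (norm_nonneg _)
  simp only [spin, Bool.false_eq_true, if_false, if_true]
  exact Real.exp_le_exp.2 (by linarith)

lemma exp_neg_mul_spin (j : ℝ) (a b : Bool) : Real.exp (-(j * (spin a * spin b))) =
    Real.cosh j - Real.sinh j * (spin a * spin b) := by
  cases a <;> cases b <;> simp [spin, Real.cosh_sub_sinh, Real.cosh_add_sinh]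

lemma eq_smul_single_add (α : Bool → ℂ) :
    α = α false • Pi.single false 1 + α true • Pi.single true 1 := by
  ext b; cases b <;> simp

lemma pairProd_not {V : Type} (σ : V → Bool) (e : Sym2 V) :
    pairProd (fun v => !σ v) e = pairProd σ e := by
  induction e with | _ u v
  simp [pairProd, spin_not]

/-- The Boltzmann weight of an Ising model without external field. -/
noncomputable def isingWeight {V : Type} (E : Finset (Sym2 V)) (J : Sym2 V → ℝ)
    (σ : V → Bool) : ℝ :=
  Real.exp (∑ e ∈ E, J e * pairProd σ e)

lemma isingWeight_not {V : Type} (E : Finset (Sym2 V)) (J : Sym2 V → ℝ) (σ : V → Bool) :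
    isingWeight E J (fun v => !σ v) = isingWeight E J σ := by
  simp only [isingWeight, pairProd_not]

end SingleSite

section Configuration

variable {V : Type} [DecidableEq V]

lemma isingWeight_insert {E : Finset (Sym2 V)} (J : Sym2 V → ℝ) {u v : V} (he : s(u, v) ∉ E)
    (σ : V → Bool) : isingWeight (insert s(u, v) E) J σ =
      isingWeight E J σ * Real.exp (J s(u, v) * (spin (σ u) * spin (σ v))) := by
  rw [isingWeight, sum_insert he, add_comm, Real.exp_add]
  rfl

/-- A quarter turn of the field at `v`: this computes the partial derivative of `fieldZ`. -/
noncomputable abbrev quarter (v : V) : V → ℂ := Pi.single v ((π / 2 : ℝ) : ℂ)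

lemma phase_comp_add_quarter (θ : V → ℂ) (v : V) :
    (fun x => phase ((θ + quarter v) x)) =
      update (fun x => phase (θ x)) v (phase (θ v + (π / 2 : ℝ))) := by
  funext x
  by_cases h : x = v
  · subst h; simp
  · simp [h]

lemma quarter_im (u v : V) : (quarter u v).im = 0 := by
  by_cases h : v = u
  · subst h; simp
  · simp [h]

end Configuration

section SpinSystem

variable {V : Type} [Fintype V] [DecidableEq V]

/-- The multilinear partition function of a spin weight `w`, with single-site weights `p`. -/
noncomputable def multiZ (w : (V → Bool) → ℝ) (p : V → Bool → ℂ) : ℂ :=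
  ∑ σ : V → Bool, (w σ : ℂ) * ∏ v, p v (σ v)

/-- The Lee–Yang property. -/
def IsLeeYang (w : (V → Bool) → ℝ) : Prop :=
  ∀ p : V → Bool → ℂ, (∀ v, ‖p v true‖ < ‖p v false‖) → multiZ w p ≠ 0

/-- The partition function with site-dependent imaginary fields. -/
noncomputable def fieldZ (w : (V → Bool) → ℝ) (θ : V → ℂ) : ℂ :=
  multiZ w fun v => phase (θ v)

lemma fieldZ_eq_sum (w : (V → Bool) → ℝ) (θ : V → ℂ) :
    fieldZ w θ = ∑ σ : V → Bool, (w σ : ℂ) * Complex.exp (Complex.I * ∑ v, θ v * spin (σ v)) := by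
  simp only [fieldZ, multiZ, phase, ← Complex.exp_sum, mul_sum, mul_assoc]

lemma prod_update_apply (p : V → Bool → ℂ) (v : V) (α : Bool → ℂ) (σ : V → Bool) :
    ∏ x, update p v α x (σ x) = α (σ v) * ∏ x ∈ univ.erase v, p x (σ x) := by
  rw [← mul_prod_erase univ _ (mem_univ v), update_self]
  congr 1
  refine prod_congr rfl fun x hx => ?_
  rw [update_of_ne (ne_of_mem_erase hx)]

lemma multiZ_update_add_smul (w : (V → Bool) → ℝ) (p : V → Bool → ℂ) (v : V)
    (α β : Bool → ℂ) (c d : ℂ) :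
    multiZ w (update p v (c • α + d • β)) =
      c * multiZ w (update p v α) + d * multiZ w (update p v β) := by
  simp only [multiZ, prod_update_apply, mul_sum, ← sum_add_distrib]
  refine sum_congr rfl fun σ _ => ?_
  simp only [Pi.add_apply, Pi.smul_apply, smul_eq_mul]
  ring

lemma multiZ_update_update (w : (V → Bool) → ℝ) (p : V → Bool → ℂ) {u v : V} (huv : u ≠ v)
    (α β : Bool → ℂ) :
    multiZ w (update (update p u α) v β) =
      α false * β false *
        multiZ w (update (update p u (Pi.single false 1)) v (Pi.single false 1)) +
      α true * β false *
        multiZ w (update (update p u (Pi.single true 1)) v (Pi.single false 1)) +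
      α false * β true *
        multiZ w (update (update p u (Pi.single false 1)) v (Pi.single true 1)) +
      α true * β true *
        multiZ w (update (update p u (Pi.single true 1)) v (Pi.single true 1)) := by
  conv_lhs => rw [eq_smul_single_add β, multiZ_update_add_smul, update_comm huv,
    update_comm huv, eq_smul_single_add α, multiZ_update_add_smul, multiZ_update_add_smul]
  simp only [update_comm huv.symm]
  ring

lemma multiZ_mul_update_single (w : (V → Bool) → ℝ) (g : Bool → Bool → ℝ) (p : V → Bool → ℂ)
    {u v : V} (huv : u ≠ v) (a b : Bool) :
    multiZ (fun σ => w σ * g (σ u) (σ v))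
        (update (update p u (Pi.single a 1)) v (Pi.single b 1)) =
      g a b * multiZ w (update (update p u (Pi.single a 1)) v (Pi.single b 1)) := by
  simp only [multiZ, mul_sum]
  refine sum_congr rfl fun σ _ => ?_
  rw [prod_update_apply, ← mul_prod_erase _ _ (mem_erase.2 ⟨huv, mem_univ u⟩), update_self]
  by_cases ha : σ u = a
  · by_cases hb : σ v = b
    · subst ha hb; push_cast; ring
    · simp [Pi.single_eq_of_ne hb]
  · simp [Pi.single_eq_of_ne ha]

/-- A ferromagnetic pair interaction preserves the Lee–Yang property. -/
lemma IsLeeYang.mul_pair {w : (V → Bool) → ℝ} (hw : IsLeeYang w) {u v : V} (huv : u ≠ v)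
    {j : ℝ} (hj : 0 ≤ j) :
    IsLeeYang fun σ => w σ * Real.exp (j * (spin (σ u) * spin (σ v))) := by
  intro p hp
  have hu : p u false ≠ 0 := norm_pos_iff.1 ((norm_nonneg _).trans_lt (hp u))
  have hv : p v false ≠ 0 := norm_pos_iff.1 ((norm_nonneg _).trans_lt (hp v))
  have hself : p = update (update p u (p u)) v (p v) := by simp
  have hZ := multiZ_update_update (fun σ => w σ * Real.exp (j * (spin (σ u) * spin (σ v)))) p huv
    (p u) (p v)
  rw [← hself] at hZ
  have hg := multiZ_mul_update_single w (fun a b => Real.exp (j * (spin a * spin b))) p huv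
  simp only [hg] at hZ
  have hform := multiZ_update_update w p huv
  generalize multiZ w (update (update p u (Pi.single false 1)) v (Pi.single false 1)) = d
    at hZ hform
  generalize multiZ w (update (update p u (Pi.single true 1)) v (Pi.single false 1)) = c
    at hZ hform
  generalize multiZ w (update (update p u (Pi.single false 1)) v (Pi.single true 1)) = b
    at hZ hform
  generalize multiZ w (update (update p u (Pi.single true 1)) v (Pi.single true 1)) = a
    at hZ hform
  have hne : ∀ z y : ℂ, ‖z‖ < 1 → ‖y‖ < 1 → d + c * z + b * y + a * z * y ≠ 0 := by
    intro z y hz hy h0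
    have h1 := hform (fun b => if b then z else 1) (fun b => if b then y else 1)
    simp only [Bool.false_eq_true, if_false, if_true] at h1
    refine hw (update (update p u (fun b => if b then z else 1)) v
      (fun b => if b then y else 1)) ?_ (by rw [h1]; linear_combination h0)
    intro x
    by_cases hxv : x = v
    · subst hxv; simpa using hy
    · by_cases hxu : x = u
      · subst hxu; simpa [hxv] using hz
      · simpa [hxv, hxu] using hp x
  have hquot : ∀ x, ‖p x true / p x false‖ < 1 := fun x => by
    rw [norm_div]
    exact (div_lt_one ((norm_nonneg _).trans_lt (hp x))).2 (hp x)
  have := biaffine_damped_ne_zero hne (τ := Real.exp (-2 * j)) (Real.exp_pos _).le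
    (Real.exp_le_one_iff.2 (by linarith)) (hquot u) (hquot v)
  intro h0
  rw [hZ] at h0
  refine this ?_
  have hexp : Real.exp (-j) = Real.exp j * Real.exp (-2 * j) := by
    rw [← Real.exp_add]; congr 1; ring
  have hjne : (Real.exp j : ℂ) ≠ 0 := by exact_mod_cast (Real.exp_pos j).ne'
  simp only [spin, Bool.false_eq_true, if_false, if_true, mul_one, mul_neg, neg_neg,
    hexp] at h0
  push_cast [-Complex.ofReal_exp] at h0 ⊢
  have hcancel : (Real.exp j * (p u false * p v false) : ℂ) ≠ 0 := by positivity
  refine (mul_eq_zero.1 ?_).resolve_left hcancel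
  rw [← h0]
  field_simp

lemma isLeeYang_one : IsLeeYang fun _ : V → Bool => (1 : ℝ) := by
  intro p hp
  have : multiZ (fun _ : V → Bool => (1 : ℝ)) p = ∏ v, (p v true + p v false) := by
    simp only [multiZ, Complex.ofReal_one, one_mul]
    rw [← Fintype.piFinset_univ, ← prod_univ_sum]
    simp
  rw [this, prod_ne_zero_iff]
  intro v _ h
  have := hp v
  rw [eq_neg_of_add_eq_zero_left h, norm_neg] at this
  exact lt_irrefl _ this

/-- The Lee–Yang theorem. -/
lemma isLeeYang_isingWeight (E : Finset (Sym2 V)) (J : Sym2 V → ℝ) (hJ : ∀ e ∈ E, 0 ≤ J e) :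
    IsLeeYang (isingWeight E J) := by
  induction E using Finset.induction_on with
  | empty =>
    convert isLeeYang_one (V := V) using 2
    simp [isingWeight]
  | insert e E he ih =>
    have ih := ih fun e h => hJ e (mem_insert_of_mem h)
    induction e with | _ u v
    have heq := funext (isingWeight_insert J he)
    rw [heq]
    by_cases huv : u = v
    · subst huv
      intro p hp
      have : multiZ (fun σ => isingWeight E J σ *
          Real.exp (J s(u, u) * (spin (σ u) * spin (σ u)))) p =
          Real.exp (J s(u, u)) * multiZ (isingWeight E J) p := by
        simp only [multiZ, mul_sum, spin_mul_self, mul_one]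
        refine sum_congr rfl fun σ _ => ?_
        push_cast; ring
      rw [this]
      exact mul_ne_zero (by exact_mod_cast (Real.exp_pos _).ne') (ih p hp)
    · exact ih.mul_pair huv (hJ _ (mem_insert_self _ _))

lemma fieldZ_neg {w : (V → Bool) → ℝ} (hw : ∀ σ, w (fun v => !σ v) = w σ) (θ : V → ℂ) :
    fieldZ w (-θ) = fieldZ w θ := by
  rw [fieldZ_eq_sum, fieldZ_eq_sum]
  have hinv : Involutive fun (σ : V → Bool) v => !σ v := fun σ => by simp
  rw [← Equiv.sum_comp hinv.toPerm]
  refine sum_congr rfl fun σ _ => ?_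
  simp [hw, spin_not]

lemma fieldZ_im {w : (V → Bool) → ℝ} (hw : ∀ σ, w (fun v => !σ v) = w σ) {θ : V → ℂ}
    (hθ : ∀ v, (θ v).im = 0) : (fieldZ w θ).im = 0 := by
  rw [← Complex.conj_eq_iff_im]
  conv_rhs => rw [← fieldZ_neg hw]
  have hc : ∀ v, (starRingEnd ℂ) (θ v) = θ v := fun v => Complex.conj_eq_iff_im.2 (hθ v)
  simp [fieldZ_eq_sum, map_sum, ← Complex.exp_conj, hc]

/-- `fieldZ` is trigonometric of degree one in each field. -/
lemma fieldZ_add_single (w : (V → Bool) → ℝ) (θ : V → ℂ) (v : V) (r : ℂ) :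
    fieldZ w (θ + Pi.single v r) = Complex.cos r * fieldZ w θ + Complex.sin r *
      ∑ σ : V → Bool, (w σ : ℂ) * (Complex.I * spin (σ v)) *
        Complex.exp (Complex.I * ∑ v, θ v * spin (σ v)) := by
  simp only [fieldZ_eq_sum, mul_sum, ← sum_add_distrib]
  refine sum_congr rfl fun σ _ => ?_
  have : ∑ x, Complex.I * ((θ + Pi.single v r : V → ℂ) x * spin (σ x)) =
      ∑ x, Complex.I * (θ x * spin (σ x)) + Complex.I * (r * spin (σ v)) := by
    simp [add_mul, mul_add, sum_add_distrib, Pi.single_apply, ite_mul, mul_ite]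
  rw [this, Complex.exp_add, exp_I_mul_spin]
  ring

lemma fieldZ_add_quarter (w : (V → Bool) → ℝ) (θ : V → ℂ) (v : V) :
    fieldZ w (θ + quarter v) = ∑ σ : V → Bool, (w σ : ℂ) * (Complex.I * spin (σ v)) *
        Complex.exp (Complex.I * ∑ v, θ v * spin (σ v)) := by
  rw [fieldZ_add_single, ← Complex.ofReal_cos, ← Complex.ofReal_sin]
  simp

lemma fieldZ_rotate (w : (V → Bool) → ℝ) (θ : V → ℂ) (v : V) (r : ℂ) :
    fieldZ w (θ + Pi.single v r) =
      Complex.cos r * fieldZ w θ + Complex.sin r * fieldZ w (θ + quarter v) := by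
  rw [fieldZ_add_single, fieldZ_add_quarter]

lemma fieldZ_add_quarter_quarter (w : (V → Bool) → ℝ) (θ : V → ℂ) (v : V) :
    fieldZ w (θ + quarter v + quarter v) = -fieldZ w θ := by
  rw [add_assoc, ← Pi.single_add, fieldZ_rotate, ← Complex.ofReal_add, add_halves]
  simp

lemma fieldZ_ne_zero {w : (V → Bool) → ℝ} (hw : IsLeeYang w) {θ : V → ℂ}
    (hθ : ∀ v, 0 < (θ v).im) : fieldZ w θ ≠ 0 := by
  refine hw _ fun v => ?_
  rw [norm_phase, norm_phase, Real.exp_lt_exp]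
  have := hθ v
  simp only [spin, Bool.false_eq_true, if_false, if_true]
  linarith

lemma fieldZ_im_nonneg {w : (V → Bool) → ℝ} (hw : IsLeeYang w) {u v : V} (huv : u ≠ v)
    {θ : V → ℂ} (hθ : ∀ x, 0 < (θ x).im) :
    0 ≤ ((fieldZ w θ + Complex.I * fieldZ w (θ + quarter u)) * (starRingEnd ℂ)
      (fieldZ w (θ + quarter v) + Complex.I * fieldZ w (θ + quarter u + quarter v))).im := by
  set N := fieldZ w θ + Complex.I * fieldZ w (θ + quarter u) with hN
  set D := fieldZ w (θ + quarter v) + Complex.I * fieldZ w (θ + quarter u + quarter v) with hD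
  by_contra! hlt
  have hD0 : D ≠ 0 := by rintro h; simp [h] at hlt
  set R := -N / D with hR
  have hRim : 0 < R.im := by
    have : R = ((-1 / Complex.normSq D : ℝ) : ℂ) * (N * (starRingEnd ℂ) D) := by
      have h2 : (Complex.normSq D : ℂ) = D * (starRingEnd ℂ) D := (Complex.mul_conj D).symm
      have h3 : (starRingEnd ℂ) D ≠ 0 := by simpa using hD0
      push_cast
      rw [h2, hR]
      field_simp
    rw [this, Complex.im_ofReal_mul]
    have hn := Complex.normSq_pos.2 hD0
    exact mul_pos_of_neg_of_neg (div_neg_of_neg_of_pos (by norm_num) hn) hlt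
  set p : V → Bool → ℂ := fun x => phase (θ x) with hp
  set α : Bool → ℂ := phase (θ u + (π / 2 : ℝ)) with hα
  set β : Bool → ℂ := phase (θ v + (π / 2 : ℝ)) with hβ
  have e0 : fieldZ w θ = multiZ w p := rfl
  have eu : fieldZ w (θ + quarter u) = multiZ w (update p u α) := by
    rw [fieldZ, phase_comp_add_quarter]
  have ev : fieldZ w (θ + quarter v) = multiZ w (update p v β) := by
    rw [fieldZ, phase_comp_add_quarter]
  have euv : fieldZ w (θ + quarter u + quarter v) = multiZ w (update (update p u α) v β) := by
    rw [fieldZ, phase_comp_add_quarter, phase_comp_add_quarter, Pi.add_apply,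
      show quarter u v = 0 from Pi.single_eq_of_ne huv.symm _, add_zero]
  have hexpand : multiZ w (update (update p u (p u + Complex.I • α)) v (p v + R • β)) =
      N + R * D := by
    have hv := multiZ_update_add_smul w (update p u (p u + Complex.I • α)) v (p v) β 1 R
    have hu := multiZ_update_add_smul w (update p v (p v)) u (p u) α 1 Complex.I
    have hu' := multiZ_update_add_smul w (update p v β) u (p u) α 1 Complex.I
    simp only [one_smul, one_mul] at hv hu hu'
    have comm : ∀ γ δ : Bool → ℂ, update (update p u γ) v δ = update (update p v δ) u γ :=
      fun γ δ => update_comm huv γ δ p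
    rw [hv, comm _ (p v), hu, comm _ β, hu', hN, hD, e0, eu, ev, euv,
      comm α β]
    have s1 : update (update p v β) u (p u) = update p v β := by
      rw [update_eq_self_iff]; simp [huv]
    rw [s1]
    simp only [update_eq_self]
  refine hw _ ?_ (hexpand.trans ?_)
  · intro x
    by_cases hxv : x = v
    · subst hxv
      rw [update_self]
      exact norm_phase_add_smul_lt (hθ x) hRim
    · by_cases hxu : x = u
      · subst hxu
        rw [update_of_ne hxv, update_self]
        exact norm_phase_add_smul_lt (S := Complex.I) (hθ x) (by simp)
      · simp only [update_of_ne hxv, update_of_ne hxu, hp, norm_phase, Real.exp_lt_exp]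
        have := hθ x
        simp only [spin, Bool.false_eq_true, if_false, if_true]
        linarith
  · rw [hR]
    field_simp
    ring

lemma continuous_fieldZ (w : (V → Bool) → ℝ) : Continuous (fieldZ w) := by
  have : fieldZ w = fun θ => _ := funext (fieldZ_eq_sum w)
  rw [this]
  fun_prop

/-- The Rayleigh-type inequality for real fields. -/
lemma fieldZ_rayleigh {w : (V → Bool) → ℝ} (hw : IsLeeYang w)
    (hsymm : ∀ σ, w (fun v => !σ v) = w σ) {u v : V} (huv : u ≠ v) {θ : V → ℂ}
    (hθ : ∀ x, (θ x).im = 0) :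
    (fieldZ w θ).re * (fieldZ w (θ + quarter u + quarter v)).re ≤
      (fieldZ w (θ + quarter u)).re * (fieldZ w (θ + quarter v)).re := by
  have hF := continuous_fieldZ w
  let ψ : ℝ → V → ℂ := fun η x => θ x + η * Complex.I
  have hψ : Continuous ψ := by fun_prop
  have hψ0 : ψ 0 = θ := by ext x; simp [ψ]
  let g : ℝ → ℝ := fun η =>
    ((fieldZ w (ψ η) + Complex.I * fieldZ w (ψ η + quarter u)) * (starRingEnd ℂ)
      (fieldZ w (ψ η + quarter v) + Complex.I * fieldZ w (ψ η + quarter u + quarter v))).im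
  have hg : Continuous g := by
    have h1 : ∀ c : V → ℂ, Continuous fun η => fieldZ w (ψ η + c) := fun c =>
      hF.comp (hψ.add continuous_const)
    have h2 : Continuous fun η => fieldZ w (ψ η + quarter u + quarter v) :=
      hF.comp ((hψ.add continuous_const).add continuous_const)
    exact Complex.continuous_im.comp (((hF.comp hψ).add (continuous_const.mul (h1 _))).mul
      (Complex.continuous_conj.comp ((h1 _).add (continuous_const.mul h2))))
  have h0 : 0 ≤ g 0 := by
    refine ge_of_tendsto (x := nhdsWithin 0 (Set.Ioi 0))
      ((hg.tendsto 0).mono_left nhdsWithin_le_nhds) ?_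
    filter_upwards [self_mem_nhdsWithin] with η hη
    refine fieldZ_im_nonneg hw huv fun x => ?_
    simpa [ψ, hθ x] using hη
  have i0 := fieldZ_im hsymm hθ
  have iu := fieldZ_im hsymm (θ := θ + quarter u) fun x => by
    rw [Pi.add_apply, Complex.add_im, hθ, quarter_im, add_zero]
  have iv := fieldZ_im hsymm (θ := θ + quarter v) fun x => by
    rw [Pi.add_apply, Complex.add_im, hθ, quarter_im, add_zero]
  have iuv := fieldZ_im hsymm (θ := θ + quarter u + quarter v) fun x => by
    rw [Pi.add_apply, Complex.add_im, Pi.add_apply, Complex.add_im, hθ, quarter_im, quarter_im,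
      add_zero, add_zero]
  simp only [g, hψ0] at h0
  simp [i0, iu, iv, iuv] at h0
  linarith

lemma fieldZ_remove_pair (w : (V → Bool) → ℝ) (u v : V) (j : ℝ) (θ : V → ℂ) :
    fieldZ w θ =
      Real.cosh j * fieldZ (fun σ => w σ * Real.exp (j * (spin (σ u) * spin (σ v)))) θ +
      Real.sinh j * fieldZ (fun σ => w σ * Real.exp (j * (spin (σ u) * spin (σ v))))
        (θ + quarter u + quarter v) := by
  have hq : ∀ σ : V → Bool,
      Complex.exp (Complex.I * ∑ x, (θ + quarter u + quarter v) x * spin (σ x)) =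
      -(spin (σ u) * spin (σ v)) * Complex.exp (Complex.I * ∑ x, θ x * spin (σ x)) := by
    intro σ
    have h1 := exp_I_mul_spin ((π / 2 : ℝ) : ℂ)
    rw [← Complex.ofReal_cos, ← Complex.ofReal_sin, Real.cos_pi_div_two,
      Real.sin_pi_div_two] at h1
    have : ∑ x, (θ + quarter u + quarter v) x * spin (σ x) =
        ∑ x, θ x * spin (σ x) + ((π / 2 : ℝ) : ℂ) * spin (σ u) +
          ((π / 2 : ℝ) : ℂ) * spin (σ v) := by
      simp [add_mul, sum_add_distrib, Pi.single_apply, ite_mul]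
    rw [this, mul_add, mul_add, Complex.exp_add, Complex.exp_add, h1, h1]
    push_cast
    linear_combination (spin (σ u) * spin (σ v) *
      Complex.exp (Complex.I * ∑ x, θ x * spin (σ x))) * Complex.I_mul_I
  simp only [fieldZ_eq_sum, mul_sum (s := (univ : Finset (V → Bool))), ← sum_add_distrib, hq]
  refine sum_congr rfl fun σ _ => ?_
  have h2 : w σ = (w σ * Real.exp (j * (spin (σ u) * spin (σ v)))) *
      (Real.cosh j - Real.sinh j * (spin (σ u) * spin (σ v))) := by
    rw [← exp_neg_mul_spin, mul_assoc, ← Real.exp_add]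
    simp
  have h3 := congrArg (fun r : ℝ => (r : ℂ)) h2
  simp only [Complex.ofReal_mul (w σ * _), Complex.ofReal_sub, Complex.ofReal_mul (Real.sinh j),
    Complex.ofReal_mul (spin _)] at h3
  linear_combination Complex.exp (Complex.I * ∑ x, θ x * spin (σ x)) * h3

/-- A vanishing partial derivative at a real zero spreads along a positive coupling. -/
lemma fieldZ_quarter_eq_zero_of_pair {w : (V → Bool) → ℝ} (hw : IsLeeYang w)
    (hsymm : ∀ σ, w (fun v => !σ v) = w σ) {u v : V} (huv : u ≠ v) {j : ℝ} (hj : 0 < j)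
    {θ : V → ℂ} (hθ : ∀ x, (θ x).im = 0)
    (h0 : fieldZ (fun σ => w σ * Real.exp (j * (spin (σ u) * spin (σ v)))) θ = 0)
    (hu : fieldZ (fun σ => w σ * Real.exp (j * (spin (σ u) * spin (σ v)))) (θ + quarter u) = 0) :
    fieldZ (fun σ => w σ * Real.exp (j * (spin (σ u) * spin (σ v)))) (θ + quarter v) = 0 := by
  have hR := fieldZ_rayleigh hw hsymm huv hθ
  have hrem := fieldZ_remove_pair w u v j
  have hsymm' : ∀ σ : V → Bool, (fun σ => w σ * Real.exp (j * (spin (σ u) * spin (σ v))))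
      (fun v => !σ v) = (fun σ => w σ * Real.exp (j * (spin (σ u) * spin (σ v)))) σ := by
    intro σ
    simp [hsymm, spin_not]
  generalize (fun σ => w σ * Real.exp (j * (spin (σ u) * spin (σ v)))) = w' at *
  have iv := fieldZ_im hsymm' (θ := θ + quarter v) fun x => by
    rw [Pi.add_apply, Complex.add_im, hθ, quarter_im, add_zero]
  have ru : fieldZ w (θ + quarter u) = -(Real.sinh j * fieldZ w' (θ + quarter v)) := by
    rw [hrem, hu, show θ + quarter u + quarter u + quarter v =
      θ + quarter v + quarter u + quarter u by abel, fieldZ_add_quarter_quarter]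
    ring
  have rv : fieldZ w (θ + quarter v) = Real.cosh j * fieldZ w' (θ + quarter v) := by
    rw [hrem, show θ + quarter v + quarter u + quarter v =
      θ + quarter u + quarter v + quarter v by abel, fieldZ_add_quarter_quarter, hu]
    ring
  have ruv : fieldZ w (θ + quarter u + quarter v) =
      Real.cosh j * fieldZ w' (θ + quarter u + quarter v) := by
    rw [hrem, show θ + quarter u + quarter v + quarter u + quarter v =
      θ + quarter u + quarter u + quarter v + quarter v by abel, fieldZ_add_quarter_quarter,
      fieldZ_add_quarter_quarter, h0]
    ring
  rw [hrem θ, h0, ru, rv, ruv, mul_zero, zero_add, Complex.neg_re] at hR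
  simp only [Complex.re_ofReal_mul] at hR
  have hs : 0 < Real.sinh j := Real.sinh_pos_iff.2 hj
  have hc := Real.cosh_pos j
  have hsc := mul_pos hs hc
  refine Complex.ext ?_ iv
  have : (fieldZ w' (θ + quarter v)).re ^ 2 ≤ 0 := by
    by_contra! hlt
    nlinarith [mul_pos hsc hlt,
      mul_nonneg hsc.le (sq_nonneg (fieldZ w' (θ + quarter u + quarter v)).re)]
  simpa using pow_eq_zero_iff two_ne_zero |>.1 (le_antisymm this (sq_nonneg _))

section Ising

variable {E : Finset (Sym2 V)} {J : Sym2 V → ℝ}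

lemma fieldZ_isingWeight_quarter_of_adj (hJ : ∀ e ∈ E, 0 ≤ J e) {u v : V}
    (hadj : (SimpleGraph.fromEdgeSet {e : Sym2 V | e ∈ E ∧ 0 < J e}).Adj u v)
    {θ : V → ℂ} (hθ : ∀ x, (θ x).im = 0) (h0 : fieldZ (isingWeight E J) θ = 0)
    (hu : fieldZ (isingWeight E J) (θ + quarter u) = 0) :
    fieldZ (isingWeight E J) (θ + quarter v) = 0 := by
  rw [SimpleGraph.fromEdgeSet_adj] at hadj
  obtain ⟨⟨he, hpos⟩, huv⟩ := hadj
  have heq := funext (isingWeight_insert J (notMem_erase s(u, v) E))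
  rw [insert_erase he] at heq
  rw [heq] at h0 hu ⊢
  exact fieldZ_quarter_eq_zero_of_pair
    (isLeeYang_isingWeight _ J fun e h => hJ e (mem_of_mem_erase h)) (isingWeight_not _ J)
    huv hpos hθ h0 hu

/-- A real zero of a connected ferromagnetic model has no vanishing partial derivative. -/
lemma fieldZ_isingWeight_quarter_ne_zero (hJ : ∀ e ∈ E, 0 ≤ J e)
    (hconn : (SimpleGraph.fromEdgeSet {e : Sym2 V | e ∈ E ∧ 0 < J e}).Connected)
    {θ : V → ℂ} (hθ : ∀ x, (θ x).im = 0) (h0 : fieldZ (isingWeight E J) θ = 0) (u : V) :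
    fieldZ (isingWeight E J) (θ + quarter u) ≠ 0 := by
  intro hu
  have spread : ∀ ψ : V → ℂ, (∀ x, (ψ x).im = 0) → fieldZ (isingWeight E J) ψ = 0 →
      ∀ a, fieldZ (isingWeight E J) (ψ + quarter a) = 0 →
      ∀ b, fieldZ (isingWeight E J) (ψ + quarter b) = 0 := by
    intro ψ hψ h a ha b
    obtain ⟨p⟩ := hconn.preconnected a b
    induction p with
    | nil => exact ha
    | cons hadj _ ih => exact ih (fieldZ_isingWeight_quarter_of_adj hJ hadj hψ h ha)
  have move : ∀ s : Finset V, fieldZ (isingWeight E J) (θ + ∑ v ∈ s, Pi.single v (-θ v)) = 0 ∧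
      ∀ b, fieldZ (isingWeight E J) (θ + ∑ v ∈ s, Pi.single v (-θ v) + quarter b) = 0 := by
    intro s
    induction s using Finset.induction_on with
    | empty => simpa using ⟨h0, spread θ hθ h0 u hu⟩
    | insert v s hv ih =>
      obtain ⟨ih0, ihq⟩ := ih
      have hsplit : θ + ∑ x ∈ insert v s, Pi.single x (-θ x) =
          θ + ∑ x ∈ s, Pi.single x (-θ x) + Pi.single v (-θ v) := by
        rw [sum_insert hv]; abel
      have hz : fieldZ (isingWeight E J) (θ + ∑ x ∈ insert v s, Pi.single x (-θ x)) = 0 := by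
        rw [hsplit, fieldZ_rotate, ih0, ihq]; simp
      refine ⟨hz, spread _ ?_ hz v ?_⟩
      · intro x
        simp only [Pi.add_apply, Complex.add_im, hθ, zero_add, Finset.sum_apply, Complex.im_sum]
        refine sum_eq_zero fun y _ => ?_
        by_cases h : x = y
        · subst h; simp [hθ]
        · simp [h]
      · rw [hsplit, add_right_comm, fieldZ_rotate, fieldZ_add_quarter_quarter, ih0, ihq]
        simp
  have hzero := (move univ).1
  rw [Finset.univ_sum_single (fun v => -θ v),
    show θ + (fun v => -θ v) = 0 from add_neg_cancel θ, fieldZ_eq_sum] at hzero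
  simp only [Pi.zero_apply, zero_mul, sum_const_zero, mul_zero, Complex.exp_zero, mul_one] at hzero
  have hpos : 0 < ∑ σ : V → Bool, isingWeight E J σ :=
    sum_pos (fun σ _ => Real.exp_pos _) univ_nonempty
  exact hpos.ne' (by exact_mod_cast hzero)

lemma sum_fieldZ_quarter_ne_zero (hJ : ∀ e ∈ E, 0 ≤ J e)
    (hconn : (SimpleGraph.fromEdgeSet {e : Sym2 V | e ∈ E ∧ 0 < J e}).Connected)
    {θ : V → ℂ} (hθ : ∀ x, (θ x).im = 0) (h0 : fieldZ (isingWeight E J) θ = 0) :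
    ∑ v, fieldZ (isingWeight E J) (θ + quarter v) ≠ 0 := by
  intro hsum
  obtain ⟨u⟩ := hconn.nonempty
  refine fieldZ_isingWeight_quarter_ne_zero hJ hconn hθ h0 u ?_
  have hre := congrArg Complex.re hsum
  rw [Complex.re_sum, Complex.zero_re] at hre
  have hprod : ∑ v, (fieldZ (isingWeight E J) (θ + quarter u)).re *
      (fieldZ (isingWeight E J) (θ + quarter v)).re = 0 := by
    rw [← mul_sum, hre, mul_zero]
  have hnonneg : ∀ v ∈ univ, 0 ≤ (fieldZ (isingWeight E J) (θ + quarter u)).re *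
      (fieldZ (isingWeight E J) (θ + quarter v)).re := by
    intro v _
    by_cases huv : u = v
    · subst huv; exact mul_self_nonneg _
    · have := fieldZ_rayleigh (isLeeYang_isingWeight E J hJ) (isingWeight_not E J) huv hθ
      rwa [h0, Complex.zero_re, zero_mul] at this
  have := (sum_eq_zero_iff_of_nonneg hnonneg).1 hprod u (mem_univ u)
  refine Complex.ext (mul_self_eq_zero.1 this) (fieldZ_im (isingWeight_not E J) fun x => ?_)
  rw [Pi.add_apply, Complex.add_im, hθ, quarter_im, add_zero]

end Ising

/-- The extra coupling `t` can be absorbed into the couplings. -/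
lemma isingZ_eq_fieldZ {E : Finset (Sym2 V)} (J : Sym2 V → ℝ) {u₀ v₀ : V} (hE : s(u₀, v₀) ∈ E)
    (t : ℝ) (x : ℂ) : IsingZ E J u₀ v₀ t x =
      fieldZ (isingWeight E fun e => J e + if e = s(u₀, v₀) then t else 0) fun _ => x := by
  rw [fieldZ_eq_sum, IsingZ]
  refine sum_congr rfl fun σ _ => ?_
  have : ∑ e ∈ E, (J e + if e = s(u₀, v₀) then t else 0) * pairProd σ e =
      t * (spin (σ u₀) * spin (σ v₀)) + ∑ e ∈ E, J e * pairProd σ e := by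
    simp only [add_mul, sum_add_distrib, ite_mul, zero_mul, sum_ite_eq', hE, if_true]
    rw [add_comm]
    rfl
  rw [isingWeight, this, Complex.ofReal_exp, ← Complex.exp_add]
  congr 1
  push_cast
  rw [← mul_sum]
  ring

lemma hasDerivAt_fieldZ_const (w : (V → Bool) → ℝ) (x : ℂ) :
    HasDerivAt (fun y => fieldZ w fun _ => y) (∑ v, fieldZ w ((fun _ => x) + quarter v)) x := by
  simp only [fieldZ_add_quarter]
  rw [sum_comm]
  simp only [fieldZ_eq_sum]
  refine HasDerivAt.fun_sum fun σ _ => ?_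
  have h : HasDerivAt (fun y : ℂ => Complex.I * ∑ v, y * spin (σ v))
      (Complex.I * ∑ v, spin (σ v)) x := by
    simp only [← mul_sum]
    simpa using ((hasDerivAt_id x).mul_const (∑ v, (spin (σ v) : ℂ))).const_mul Complex.I
  refine (h.cexp.const_mul (w σ : ℂ)).congr_deriv ?_
  simp only [← sum_mul, ← mul_sum]
  push_cast
  ring

end SpinSystem

theorem stmt8 {V : Type} [Fintype V] [DecidableEq V]
    (E : Finset (Sym2 V)) (J : Sym2 V → ℝ) (u₀ v₀ : V)
    (hE : s(u₀, v₀) ∈ E)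
    (hferro : ∀ e ∈ E, 0 ≤ J e)
    (hconn : (SimpleGraph.fromEdgeSet {e : Sym2 V | e ∈ E ∧ 0 < J e}).Connected)
    (t : ℝ) (ht : 0 ≤ t)
    (x : ℂ) (hx : IsingZ E J u₀ v₀ t x = 0) :
    deriv (IsingZ E J u₀ v₀ t) x ≠ 0 := by
  rw [funext (isingZ_eq_fieldZ J hE t), (hasDerivAt_fieldZ_const _ x).deriv]
  rw [isingZ_eq_fieldZ J hE] at hx
  have hJ : ∀ e, J e ≤ J e + if e = s(u₀, v₀) then t else 0 := by
    intro e
    split_ifs <;> simp [ht]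
  have hJ' : ∀ e ∈ E, 0 ≤ J e + if e = s(u₀, v₀) then t else 0 :=
    fun e he => (hferro e he).trans (hJ e)
  have hLY := isLeeYang_isingWeight E _ hJ'
  refine sum_fieldZ_quarter_ne_zero hJ' (hconn.mono ?_) (fun _ => ?_) hx
  · exact SimpleGraph.fromEdgeSet_mono fun e he => ⟨he.1, he.2.trans_le (hJ e)⟩
  · rcases lt_trichotomy x.im 0 with h | h | h
    · rw [← fieldZ_neg (isingWeight_not E _)] at hx
      exact absurd hx (fieldZ_ne_zero hLY fun _ => by simpa using h)
    · exact h
    · exact absurd hx (fieldZ_ne_zero hLY fun _ => h)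
end

section
/- Suppose that J is ferromagnetic, that the subgraph G_{>0} is connected, and let t ≥ 0. If n is even, then the set {x ∈ (0,π/2) : Z_{G,t}(x) = 0} has exactly n/2 elements and Z_{G,t}(π/2) ≠ 0. If n is odd, then the set {x ∈ (0,π/2) : Z_{G,t}(x) = 0} has exactly (n−1)/2 elements and Z_{G,t}(π/2) = 0. -/
open scoped Real

section LeeYang

open Finset

theorem norm_reversed_field_le_of_lt {V : Type} [DecidableEq V] (T : Finset V)
    (w : Finset V → ℝ) (hw : ∀ S ⊆ T, w (T \ S) = w S)
    (hP : ∀ z : V → ℂ, (∀ i ∈ T, ‖z i‖ < 1) → ∑ S ∈ T.powerset, (w S : ℂ) * ∏ i ∈ S, z i ≠ 0)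
    (c : V → ℝ) (hc0 : ∀ i ∈ T, 0 ≤ c i) (hc1 : ∀ i ∈ T, c i < 1)
    (z : V → ℂ) (hz : ∀ i ∈ T, ‖z i‖ ≤ 1) :
    ‖∑ S ∈ T.powerset, (w S : ℂ) * ((∏ i ∈ S, z i) * ∏ i ∈ T \ S, (c i : ℂ))‖
      ≤ ‖∑ S ∈ T.powerset, (w S : ℂ) * ∏ i ∈ S, ((c i : ℂ) * z i)‖ := by
  have hB : ∀ z : V → ℂ, (∀ i ∈ T, ‖z i‖ ≤ 1) →
      ∑ S ∈ T.powerset, (w S : ℂ) * ∏ i ∈ S, ((c i : ℂ) * z i) ≠ 0 := by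
    intro z hz
    refine hP (fun i => (c i : ℂ) * z i) fun i hi => ?_
    rw [norm_mul, Complex.norm_real, Real.norm_of_nonneg (hc0 i hi)]
    nlinarith [hz i hi, hc0 i hi, hc1 i hi, norm_nonneg (z i)]
  have key : ∀ U : Finset V, ∀ z : V → ℂ, (∀ i ∈ T, ‖z i‖ ≤ 1) →
      (∀ i ∈ T, i ∉ U → ‖z i‖ = 1) →
      ‖∑ S ∈ T.powerset, (w S : ℂ) * ((∏ i ∈ S, z i) * ∏ i ∈ T \ S, (c i : ℂ))‖
        ≤ ‖∑ S ∈ T.powerset, (w S : ℂ) * ∏ i ∈ S, ((c i : ℂ) * z i)‖ := by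
    intro U
    induction U using Finset.induction_on with
    | empty =>
      intro z _ hz1
      have hz1 : ∀ i ∈ T, ‖z i‖ = 1 := fun i hi => hz1 i hi (notMem_empty i)
      have hconj : (∏ i ∈ T, z i) *
          (starRingEnd ℂ) (∑ S ∈ T.powerset, (w S : ℂ) * ∏ i ∈ S, ((c i : ℂ) * z i))
          = ∑ S ∈ T.powerset, (w S : ℂ) * ((∏ i ∈ S, z i) * ∏ i ∈ T \ S, (c i : ℂ)) := by
        rw [map_sum, mul_sum]
        refine sum_bij' (fun S _ => T \ S) (fun S _ => T \ S) ?_ ?_ ?_ ?_ ?_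
        · intro S _; exact mem_powerset.2 sdiff_subset
        · intro S _; exact mem_powerset.2 sdiff_subset
        · intro S hS; exact Finset.sdiff_sdiff_eq_self (mem_powerset.1 hS)
        · intro S hS; exact Finset.sdiff_sdiff_eq_self (mem_powerset.1 hS)
        · intro S hS
          have hST := mem_powerset.1 hS
          rw [Finset.sdiff_sdiff_eq_self hST, hw S hST, ← prod_sdiff hST]
          simp only [map_mul, Complex.conj_ofReal, map_prod, prod_mul_distrib]
          have : (∏ i ∈ S, z i) * ∏ i ∈ S, (starRingEnd ℂ) (z i) = 1 := by
            rw [← prod_mul_distrib]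
            refine prod_eq_one fun i hi => ?_
            rw [Complex.mul_conj, Complex.normSq_eq_norm_sq, hz1 i (hST hi)]
            simp
          linear_combination (w S : ℂ) * (∏ i ∈ T \ S, z i) * (∏ i ∈ S, (c i : ℂ)) * this
      rw [← hconj, norm_mul, RCLike.norm_conj, norm_prod, prod_eq_one hz1, one_mul]
    | insert u U _ ih =>
      intro z hz hz1
      by_cases hu : u ∈ T
      swap
      · exact ih z hz fun i hi hiU => hz1 i hi (by
          rw [mem_insert]; rintro (rfl | h)
          exacts [hu hi, hiU h])
      have hupd : ∀ ζ : ℂ, ‖ζ‖ ≤ 1 → ∀ i ∈ T, ‖Function.update z u ζ i‖ ≤ 1 := by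
        intro ζ hζ i hi
        by_cases h : i = u
        · subst h; simpa using hζ
        · simpa [h] using hz i hi
      have hdu : ∀ i, Differentiable ℂ fun ζ : ℂ => Function.update z u ζ i := by
        intro i
        by_cases h : i = u
        · subst h; simp
        · simp [h]
      let f : ℂ → ℂ := fun ζ =>
        (∑ S ∈ T.powerset, (w S : ℂ) *
            ((∏ i ∈ S, Function.update z u ζ i) * ∏ i ∈ T \ S, (c i : ℂ)))
          / ∑ S ∈ T.powerset, (w S : ℂ) * ∏ i ∈ S, ((c i : ℂ) * Function.update z u ζ i)
      have hf : DiffContOnCl ℂ f (Metric.ball 0 1) := by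
        apply DifferentiableOn.diffContOnCl
        rw [closure_ball _ one_ne_zero]
        refine DifferentiableOn.div (Differentiable.differentiableOn ?_)
          (Differentiable.differentiableOn ?_) fun ζ hζ => hB _ (hupd ζ (by simpa using hζ))
        · fun_prop
        · fun_prop
      have hfr : ∀ ζ ∈ frontier (Metric.ball (0 : ℂ) 1), ‖f ζ‖ ≤ 1 := by
        intro ζ hζ
        rw [frontier_ball _ one_ne_zero, mem_sphere_zero_iff_norm] at hζ
        rw [norm_div]
        refine div_le_one_of_le₀ (ih _ (hupd ζ hζ.le) fun i hi hiU => ?_) (norm_nonneg _)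
        by_cases h : i = u
        · subst h; simpa using hζ
        · simpa [h] using hz1 i hi (by simp [h, hiU])
      have := Complex.norm_le_of_forall_mem_frontier_norm_le Metric.isBounded_ball hf hfr
        (z := z u) (by rw [closure_ball _ one_ne_zero]; simpa using hz u hu)
      simp only [f, Function.update_eq_self, norm_div] at this
      rwa [div_le_one (norm_pos_iff.2 (hB z hz))] at this
  exact key T z hz fun i hi h => absurd hi h

/-- A multi-affine polynomial with real self-reciprocal coefficients that has no zero in the open
polydisc is at least as large, on the closed polydisc, as its counterpart with the fields `c`
reversed. -/
theorem norm_reversed_field_le {V : Type} [DecidableEq V] (T : Finset V)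
    (w : Finset V → ℝ) (hw : ∀ S ⊆ T, w (T \ S) = w S)
    (hP : ∀ z : V → ℂ, (∀ i ∈ T, ‖z i‖ < 1) → ∑ S ∈ T.powerset, (w S : ℂ) * ∏ i ∈ S, z i ≠ 0)
    (c : V → ℝ) (hc0 : ∀ i ∈ T, 0 ≤ c i) (hc1 : ∀ i ∈ T, c i ≤ 1)
    (z : V → ℂ) (hz : ∀ i ∈ T, ‖z i‖ ≤ 1) :
    ‖∑ S ∈ T.powerset, (w S : ℂ) * ((∏ i ∈ S, z i) * ∏ i ∈ T \ S, (c i : ℂ))‖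
      ≤ ‖∑ S ∈ T.powerset, (w S : ℂ) * ∏ i ∈ S, ((c i : ℂ) * z i)‖ := by
  let F : ℝ → ℝ := fun r =>
    ‖∑ S ∈ T.powerset, (w S : ℂ) * ((∏ i ∈ S, z i) * ∏ i ∈ T \ S, ((r * c i : ℝ) : ℂ))‖
  let H : ℝ → ℝ := fun r =>
    ‖∑ S ∈ T.powerset, (w S : ℂ) * ∏ i ∈ S, (((r * c i : ℝ) : ℂ) * z i)‖
  have hF : Continuous F := by fun_prop
  have hH : Continuous H := by fun_prop
  have hlt : ∀ r ∈ Set.Ioo (0 : ℝ) 1, F r ≤ H r := fun r hr =>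
    norm_reversed_field_le_of_lt T w hw hP (fun i => r * c i)
      (fun i hi => mul_nonneg hr.1.le (hc0 i hi))
      (fun i hi => by nlinarith [hc0 i hi, hc1 i hi, hr.1, hr.2]) z hz
  have h1 : F 1 ≤ H 1 :=
    closure_minimal (s := Set.Ioo (0 : ℝ) 1) (t := {r | F r ≤ H r}) hlt
      (isClosed_le hF hH) (by rw [closure_Ioo (by norm_num)]; simp)
  simpa [F, H] using h1

/-- The multivariate Lee–Yang polynomial of the vertex set `T`, with cut weights `a`. -/
noncomputable def leeYang {V : Type} [DecidableEq V] (a : V → V → ℝ) (T : Finset V)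
    (z : V → ℂ) : ℂ :=
  ∑ S ∈ T.powerset, ((∏ i ∈ S, ∏ j ∈ T \ S, a i j : ℝ) : ℂ) * ∏ i ∈ S, z i

theorem leeYang_insert {V : Type} [DecidableEq V] (a : V → V → ℝ) (ha : ∀ i j, a i j = a j i)
    {T : Finset V} {v : V} (hv : v ∉ T) (z : V → ℂ) :
    leeYang a (insert v T) z = leeYang a T (fun i => (a v i : ℂ) * z i)
      + z v * ∑ S ∈ T.powerset, ((∏ i ∈ S, ∏ j ∈ T \ S, a i j : ℝ) : ℂ) *
        ((∏ i ∈ S, z i) * ∏ i ∈ T \ S, (a v i : ℂ)) := by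
  unfold leeYang
  rw [sum_powerset_insert hv, mul_sum]
  congr 1
  · refine sum_congr rfl fun S hS => ?_
    have hvS : v ∉ S := fun h => hv (mem_powerset.1 hS h)
    rw [insert_sdiff_of_notMem _ hvS, prod_mul_distrib]
    have : ∀ i ∈ S, ∏ j ∈ insert v (T \ S), a i j = a v i * ∏ j ∈ T \ S, a i j := by
      intro i _
      rw [prod_insert (by simp [hv]), ha]
    rw [prod_congr rfl this, prod_mul_distrib]
    push_cast
    ring
  · refine sum_congr rfl fun S hS => ?_
    have hvS : v ∉ S := fun h => hv (mem_powerset.1 hS h)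
    have : insert v T \ insert v S = T \ S := by
      ext x; simp only [mem_sdiff, mem_insert]
      constructor
      · rintro ⟨h | h, h'⟩ <;> tauto
      · rintro ⟨h, h'⟩
        refine ⟨Or.inr h, ?_⟩
        rintro (rfl | h'')
        exacts [hv h, h' h'']
    rw [this, prod_insert hvS, prod_insert hvS]
    push_cast
    ring

theorem cutWeight_sdiff {V : Type} [DecidableEq V] (a : V → V → ℝ) (ha : ∀ i j, a i j = a j i)
    (T S : Finset V) (hS : S ⊆ T) :
    ∏ i ∈ T \ S, ∏ j ∈ T \ (T \ S), a i j = ∏ i ∈ S, ∏ j ∈ T \ S, a i j := by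
  rw [Finset.sdiff_sdiff_eq_self hS, prod_comm]
  exact prod_congr rfl fun i _ => prod_congr rfl fun j _ => ha j i

/-- Strict Lee–Yang theorem: no zeros in the closed polydisc as soon as each subset of `T` with
trivial boundary contains a vertex whose variable lies in the open disc. -/
theorem leeYang_ne_zero {V : Type} [DecidableEq V] (a : V → V → ℝ) (ha : ∀ i j, a i j = a j i)
    (ha0 : ∀ i j, 0 ≤ a i j) (ha1 : ∀ i j, a i j ≤ 1) (T : Finset V) (z : V → ℂ)
    (hz : ∀ i ∈ T, ‖z i‖ ≤ 1)
    (hT : ∀ S ⊆ T, S.Nonempty → (∀ i ∈ S, ∀ j ∈ T \ S, a i j = 1) → ∃ i ∈ S, ‖z i‖ < 1) :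
    leeYang a T z ≠ 0 := by
  induction hcard : #T generalizing T z with
  | zero =>
    rw [card_eq_zero] at hcard
    subst hcard
    simp [leeYang]
  | succ m ih =>
    have hne : T.Nonempty := card_pos.1 (by omega)
    obtain ⟨v, hvT, hv1⟩ := hT T Subset.rfl hne (by simp)
    obtain ⟨T', hvT', rfl⟩ : ∃ T', v ∉ T' ∧ insert v T' = T :=
      ⟨T.erase v, notMem_erase v T, insert_erase hvT⟩
    have hcard' : #T' = m := by rw [card_insert_of_notMem hvT'] at hcard; omega
    have hB : leeYang a T' (fun i => (a v i : ℂ) * z i) ≠ 0 := by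
      have hle : ∀ i ∈ T', a v i * ‖z i‖ ≤ 1 := fun i hi =>
        mul_le_one₀ (ha1 v i) (norm_nonneg _) (hz i (mem_insert_of_mem hi))
      have hnorm : ∀ i, ‖(a v i : ℂ) * z i‖ = a v i * ‖z i‖ := fun i => by
        rw [norm_mul, Complex.norm_real, Real.norm_of_nonneg (ha0 v i)]
      refine ih T' _ (fun i hi => (hnorm i).trans_le (hle i hi)) ?_ hcard'
      intro S hS hSne hSa
      by_cases h : ∃ i ∈ S, a v i < 1
      · obtain ⟨i, hi, hai⟩ := h
        refine ⟨i, hi, (hnorm i).trans_lt ?_⟩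
        nlinarith [hz i (mem_insert_of_mem (hS hi)), ha0 v i, norm_nonneg (z i)]
      · push Not at h
        obtain ⟨i, hi, hi1⟩ := hT S (hS.trans (subset_insert v T')) hSne (by
          intro i hi j hj
          rw [mem_sdiff, mem_insert] at hj
          rcases hj with ⟨rfl | hj, hjS⟩
          · rw [ha]; exact le_antisymm (ha1 _ _) (h i hi)
          · exact hSa i hi j (mem_sdiff.2 ⟨hj, hjS⟩))
        refine ⟨i, hi, (hnorm i).trans_lt ?_⟩
        nlinarith [ha1 v i, ha0 v i, norm_nonneg (z i)]
    have hle := norm_reversed_field_le T' (fun S => ∏ i ∈ S, ∏ j ∈ T' \ S, a i j)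
      (fun S hS => cutWeight_sdiff a ha T' S hS)
      (fun y hy => ih T' y (fun i hi => (hy i hi).le)
        (fun S hS hSne _ => hSne.imp fun i hi => ⟨hi, hy i (hS hi)⟩) hcard')
      (a v) (fun i _ => ha0 v i) (fun i _ => ha1 v i) z
      (fun i hi => hz i (mem_insert_of_mem hi))
    rw [leeYang_insert a ha hvT']
    intro h0
    have hnorm := congrArg norm (eq_neg_of_add_eq_zero_left h0)
    rw [norm_neg, norm_mul] at hnorm
    have hpos := norm_pos_iff.2 hB
    have hle' := mul_le_mul_of_nonneg_left hle (norm_nonneg (z v))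
    change ‖z v‖ * _ ≤ ‖z v‖ * ‖leeYang a T' (fun i => (a v i : ℂ) * z i)‖ at hle'
    nlinarith

/-- The one-variable Lee–Yang polynomial. -/
noncomputable def leeYangPoly {V : Type} [Fintype V] [DecidableEq V] (a : V → V → ℝ) :
    Polynomial ℂ :=
  ∑ S ∈ (univ : Finset V).powerset,
    Polynomial.C ((∏ i ∈ S, ∏ j ∈ univ \ S, a i j : ℝ) : ℂ) * Polynomial.X ^ #S

section

variable {V : Type} [Fintype V] [DecidableEq V] (a : V → V → ℝ)

theorem eval_leeYangPoly (z : ℂ) : (leeYangPoly a).eval z = leeYang a univ fun _ => z := by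
  simp only [leeYangPoly, leeYang, Polynomial.eval_finsetSum, Polynomial.eval_mul,
    Polynomial.eval_C, Polynomial.eval_pow, Polynomial.eval_X, prod_const]

theorem eval_conj_leeYangPoly (z : ℂ) :
    (leeYangPoly a).eval ((starRingEnd ℂ) z) = (starRingEnd ℂ) ((leeYangPoly a).eval z) := by
  simp only [eval_leeYangPoly, leeYang, map_sum, map_mul, Complex.conj_ofReal, map_prod]

theorem eval_leeYangPoly_eq_pow_mul (ha : ∀ i j, a i j = a j i) {z : ℂ} (hz : z ≠ 0) :
    (leeYangPoly a).eval z = z ^ Fintype.card V * (leeYangPoly a).eval z⁻¹ := by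
  simp only [eval_leeYangPoly, leeYang, mul_sum, prod_const]
  refine sum_bij' (fun S _ => univ \ S) (fun S _ => univ \ S) ?_ ?_ ?_ ?_ ?_
  · intro S _; simp
  · intro S _; simp
  · intro S _; exact Finset.sdiff_sdiff_eq_self (subset_univ S)
  · intro S _; exact Finset.sdiff_sdiff_eq_self (subset_univ S)
  · intro S _
    have hcard : Fintype.card V = #S + #(univ \ S) := by
      rw [← card_univ, ← card_sdiff_add_card_eq_card (subset_univ S), add_comm]
    rw [cutWeight_sdiff a ha univ S (subset_univ S), hcard, pow_add]
    rw [inv_pow]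
    field_simp

theorem natDegree_leeYangPoly : (leeYangPoly a).natDegree = Fintype.card V := by
  refine Polynomial.natDegree_eq_of_le_of_coeff_ne_zero ?_ ?_
  · refine Polynomial.natDegree_sum_le_of_forall_le _ _ fun S _ => ?_
    exact (Polynomial.natDegree_C_mul_X_pow_le _ _).trans (card_le_univ S)
  · rw [leeYangPoly, Polynomial.finsetSum_coeff, sum_eq_single univ]
    · simp
    · intro S _ hS
      have : Fintype.card V ≠ #S := fun h => hS (card_eq_iff_eq_univ S |>.1 h.symm)
      rw [Polynomial.coeff_C_mul_X_pow, if_neg this]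
    · simp

theorem eval_one_leeYangPoly_ne_zero (ha0 : ∀ i j, 0 < a i j) : (leeYangPoly a).eval 1 ≠ 0 := by
  have hpos : 0 < ∑ S ∈ (univ : Finset V).powerset, ∏ i ∈ S, ∏ j ∈ univ \ S, a i j :=
    sum_pos (fun S _ => prod_pos fun i _ => prod_pos fun j _ => ha0 i j) ⟨∅, by simp⟩
  have : (leeYangPoly a).eval 1
      = ((∑ S ∈ (univ : Finset V).powerset, ∏ i ∈ S, ∏ j ∈ univ \ S, a i j : ℝ) : ℂ) := by
    simp [eval_leeYangPoly, leeYang]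
  rw [this]
  exact_mod_cast hpos.ne'

/-- Symmetric cut weights in `[0, 1]` whose graph of nontrivial weights is connected. -/
structure IsConnectedWeight : Prop where
  symm : ∀ i j, a i j = a j i
  nonneg : ∀ i j, 0 ≤ a i j
  le_one : ∀ i j, a i j ≤ 1
  eq_univ : ∀ S : Finset V, S.Nonempty → (∀ i ∈ S, ∀ j ∈ univ \ S, a i j = 1) → S = univ

variable {a}

theorem leeYang_univ_ne_zero (h : IsConnectedWeight a)
    (z : V → ℂ) (hz : ∀ i, ‖z i‖ ≤ 1) {v : V} (hv : ‖z v‖ < 1) : leeYang a univ z ≠ 0 := by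
  refine leeYang_ne_zero a h.symm h.nonneg h.le_one univ z (fun i _ => hz i) fun S _ hS hSa => ?_
  exact ⟨v, by rw [h.eq_univ S hS hSa]; exact mem_univ v, hv⟩

theorem norm_eq_one_of_isRoot_leeYangPoly [Nonempty V] (h : IsConnectedWeight a)
    {z : ℂ} (hz : (leeYangPoly a).eval z = 0) : ‖z‖ = 1 := by
  have hlt : ∀ y : ℂ, ‖y‖ < 1 → (leeYangPoly a).eval y ≠ 0 := fun y hy => by
    rw [eval_leeYangPoly]
    exact leeYang_univ_ne_zero h (fun _ => y) (fun _ => hy.le)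
      (v := Classical.arbitrary V) hy
  rcases lt_trichotomy ‖z‖ 1 with hlt1 | heq | hgt
  · exact absurd hz (hlt z hlt1)
  · exact heq
  · have hz0 : z ≠ 0 := norm_pos_iff.1 (zero_lt_one.trans hgt)
    rw [eval_leeYangPoly_eq_pow_mul a h.symm hz0, mul_eq_zero] at hz
    rcases hz with hz | hz
    · exact absurd hz (pow_ne_zero _ hz0)
    · exact absurd hz (hlt _ (by rw [norm_inv]; exact inv_lt_one_of_one_lt₀ hgt))

theorem exists_radial_lower_bound_leeYangPoly [Nonempty V] (h : IsConnectedWeight a) :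
    ∃ B : ℂ → ℂ, Continuous B ∧ (∀ z, ‖z‖ ≤ 1 → B z ≠ 0) ∧
      ∀ z, ‖z‖ ≤ 1 → (1 - ‖z‖) * ‖B z‖ ≤ ‖(leeYangPoly a).eval z‖ := by
  obtain ⟨v⟩ := ‹Nonempty V›
  have hv : v ∉ (univ : Finset V).erase v := notMem_erase v _
  have huniv : insert v ((univ : Finset V).erase v) = univ := insert_erase (mem_univ v)
  refine ⟨fun z => leeYang a (univ.erase v) fun i => (a v i : ℂ) * z, ?_, ?_, ?_⟩
  · unfold leeYang
    fun_prop
  · intro z hz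
    have := leeYang_univ_ne_zero h (Function.update (fun _ => z) v 0) (by
      intro i
      by_cases hi : i = v
      · subst hi; simp
      · simpa [hi] using hz) (v := v) (by simp)
    rw [← huniv, leeYang_insert a h.symm hv, Function.update_self, zero_mul, add_zero] at this
    convert this using 1
    unfold leeYang
    refine sum_congr rfl fun S hS => ?_
    congr 1
    refine prod_congr rfl fun i hi => ?_
    dsimp only
    rw [Function.update_of_ne (ne_of_mem_erase (mem_powerset.1 hS hi))]
  · intro z hz
    have heval : (leeYangPoly a).eval z = leeYang a (insert v (univ.erase v)) fun _ => z := by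
      rw [huniv, eval_leeYangPoly]
    rw [heval, leeYang_insert a h.symm hv]
    have hle := norm_reversed_field_le (univ.erase v)
      (fun S => ∏ i ∈ S, ∏ j ∈ univ.erase v \ S, a i j)
      (fun S hS => cutWeight_sdiff a h.symm _ S hS)
      (fun y hy => leeYang_ne_zero a h.symm h.nonneg h.le_one _ y (fun i hi => (hy i hi).le)
        fun S hS hSne _ => hSne.imp fun i hi => ⟨hi, hy i (hS hi)⟩)
      (a v) (fun i _ => h.nonneg v i) (fun i _ => h.le_one v i) (fun _ => z) (fun _ _ => hz)
    have hle' := mul_le_mul_of_nonneg_left hle (norm_nonneg z)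
    change ‖z‖ * _ ≤ ‖z‖ * ‖leeYang a (univ.erase v) (fun i => (a v i : ℂ) * z)‖ at hle'
    rw [← norm_mul] at hle'
    have htri := norm_sub_le_norm_add (leeYang a (univ.erase v) (fun i => (a v i : ℂ) * z))
      (z * ∑ S ∈ (univ.erase v).powerset,
        ((∏ i ∈ S, ∏ j ∈ univ.erase v \ S, a i j : ℝ) : ℂ) *
          ((∏ _i ∈ S, z) * ∏ i ∈ univ.erase v \ S, (a v i : ℂ)))
    linarith

theorem nodup_roots_leeYangPoly [Nonempty V] (h : IsConnectedWeight a) :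
    (leeYangPoly a).roots.Nodup := by
  obtain ⟨B, hBc, hB0, hB⟩ := exists_radial_lower_bound_leeYangPoly h
  rw [Multiset.nodup_iff_count_le_one]
  intro z
  rw [Polynomial.count_roots]
  by_contra! hmult
  obtain ⟨q, hq⟩ : (Polynomial.X - Polynomial.C z) ^ 2 ∣ leeYangPoly a :=
    (pow_dvd_pow _ hmult).trans (Polynomial.pow_rootMultiplicity_dvd _ _)
  have hz : ‖z‖ = 1 := norm_eq_one_of_isRoot_leeYangPoly h (by simp [hq])
  have hlt : ∀ r ∈ Set.Ioo (0 : ℝ) 1, ‖B (r * z)‖ ≤ (1 - r) * ‖q.eval ((r : ℂ) * z)‖ := by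
    intro r hr
    have hrz : ‖(r : ℂ) * z‖ = r := by
      rw [norm_mul, hz, mul_one, Complex.norm_real, Real.norm_of_nonneg hr.1.le]
    have hsub : ‖(r : ℂ) * z - z‖ = 1 - r := by
      have : (r : ℂ) * z - z = -(((1 - r : ℝ) : ℂ) * z) := by push_cast; ring
      rw [this, norm_neg, norm_mul, hz, mul_one, Complex.norm_real,
        Real.norm_of_nonneg (by linarith [hr.2])]
    have hbound := hB (r * z) (hrz.trans_le hr.2.le)
    rw [hq, hrz] at hbound
    simp only [Polynomial.eval_mul, Polynomial.eval_pow, Polynomial.eval_sub, Polynomial.eval_X,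
      Polynomial.eval_C, norm_mul, norm_pow, hsub] at hbound
    have hpos : 0 < 1 - r := by linarith [hr.2]
    exact le_of_mul_le_mul_left (hbound.trans_eq (by ring)) hpos
  have h1 : (1 : ℝ) ∈ {r : ℝ | ‖B (r * z)‖ ≤ (1 - r) * ‖q.eval ((r : ℂ) * z)‖} :=
    closure_minimal (s := Set.Ioo (0 : ℝ) 1)
      (t := {r : ℝ | ‖B (r * z)‖ ≤ (1 - r) * ‖q.eval ((r : ℂ) * z)‖}) hlt
      (isClosed_le (by fun_prop) (by fun_prop)) (by rw [closure_Ioo (by norm_num)]; simp)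
  simp only [Set.mem_ofPred_eq, Complex.ofReal_one, one_mul, sub_self, zero_mul] at h1
  exact hB0 z hz.le (norm_le_zero_iff.1 h1)

theorem card_roots_leeYangPoly [Nonempty V] (h : IsConnectedWeight a) :
    #(leeYangPoly a).roots.toFinset = Fintype.card V := by
  rw [Multiset.toFinset_card_of_nodup (nodup_roots_leeYangPoly h),
    IsAlgClosed.card_roots_eq_natDegree, natDegree_leeYangPoly]

/-- The zeros of the Lee–Yang polynomial come in conjugate pairs, apart from a possible `-1`. -/
theorem exists_encard_angle_leeYangPoly [Nonempty V] (h : IsConnectedWeight a)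
    (hpos : ∀ i j, 0 < a i j) :
    ∃ k : ℕ, {x : ℝ | x ∈ Set.Ioo 0 (π / 2) ∧
        (leeYangPoly a).eval (Complex.exp (2 * x * Complex.I)) = 0}.encard = k ∧
      Fintype.card V = 2 * k + if (leeYangPoly a).eval (-1) = 0 then 1 else 0 := by
  set R := (leeYangPoly a).roots.toFinset with hR
  have hp0 : leeYangPoly a ≠ 0 := fun h0 =>
    eval_one_leeYangPoly_ne_zero a hpos (by rw [h0, Polynomial.eval_zero])
  have hmem : ∀ z, z ∈ R ↔ (leeYangPoly a).eval z = 0 := fun z => by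
    rw [hR, Multiset.mem_toFinset, Polynomial.mem_roots hp0, Polynomial.IsRoot]
  have hnorm : ∀ z ∈ R, ‖z‖ = 1 := fun z hz =>
    norm_eq_one_of_isRoot_leeYangPoly h ((hmem z).1 hz)
  have hconj : ∀ z ∈ R, (starRingEnd ℂ) z ∈ R := fun z hz => by
    rw [hmem, eval_conj_leeYangPoly, (hmem z).1 hz, map_zero]
  refine ⟨#{z ∈ R | 0 < z.im}, ?_, ?_⟩
  · have himage : {x : ℝ | x ∈ Set.Ioo 0 (π / 2) ∧
        (leeYangPoly a).eval (Complex.exp (2 * x * Complex.I)) = 0}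
        = (fun z : ℂ => z.arg / 2) '' ({z ∈ R | 0 < z.im} : Finset ℂ) := by
      ext x
      simp only [Set.mem_ofPred_eq, Set.mem_image, mem_coe, mem_filter]
      constructor
      · rintro ⟨⟨hx0, hx1⟩, hx⟩
        have hcast : (2 * x * Complex.I : ℂ) = ((2 * x : ℝ) : ℂ) * Complex.I := by push_cast; rfl
        refine ⟨Complex.exp (2 * x * Complex.I), ⟨(hmem _).2 hx, ?_⟩, ?_⟩
        · rw [hcast, Complex.exp_ofReal_mul_I_im]
          exact Real.sin_pos_of_pos_of_lt_pi (by linarith) (by linarith)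
        · rw [hcast, Complex.arg_exp_mul_I, (toIocMod_eq_self _).2 ⟨by linarith, by linarith⟩]
          ring
      · rintro ⟨z, ⟨hz, him⟩, rfl⟩
        have harg0 : 0 < z.arg := by
          refine lt_of_le_of_ne (Complex.arg_nonneg_iff.2 him.le) fun h0 => ?_
          exact him.ne' (Complex.arg_eq_zero_iff.1 h0.symm).2
        have hargpi : z.arg < π := by
          refine lt_of_le_of_ne (Complex.arg_le_pi z) fun h0 => ?_
          exact him.ne' (Complex.arg_eq_pi_iff.1 h0).2
        refine ⟨⟨by linarith, by linarith⟩, ?_⟩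
        have hexp := Complex.norm_mul_exp_arg_mul_I z
        rw [hnorm z hz, Complex.ofReal_one, one_mul] at hexp
        have : (2 * ((z.arg / 2 : ℝ) : ℂ) * Complex.I) = z.arg * Complex.I := by push_cast; ring
        rw [this, hexp]
        exact (hmem z).1 hz
    rw [himage, Set.InjOn.encard_image, Set.encard_coe_eq_coe_finsetCard]
    intro z hz y hy hzy
    have hz' := hnorm z (mem_filter.1 (mem_coe.1 hz)).1
    have hy' := hnorm y (mem_filter.1 (mem_coe.1 hy)).1
    exact Complex.ext_norm_arg (hz'.trans hy'.symm) (by simp only at hzy; linarith)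
  · have hlower : #{z ∈ R | z.im < 0} = #{z ∈ R | 0 < z.im} := by
      refine card_bij' (fun z _ => (starRingEnd ℂ) z) (fun z _ => (starRingEnd ℂ) z) ?_ ?_ ?_ ?_
      · intro z hz
        rw [mem_filter] at hz ⊢
        exact ⟨hconj z hz.1, by simpa using hz.2⟩
      · intro z hz
        rw [mem_filter] at hz ⊢
        exact ⟨hconj z hz.1, by simpa using hz.2⟩
      · intro z _; exact Complex.conj_conj z
      · intro z _; exact Complex.conj_conj z
    have hreal : #{z ∈ R | z.im = 0} = if (leeYangPoly a).eval (-1) = 0 then 1 else 0 := by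
      have hsub : ∀ z ∈ R, z.im = 0 → z = -1 := by
        intro z hz him
        have hzre : z = (z.re : ℂ) := Complex.ext rfl (by simpa using him)
        have h1 := hnorm z hz
        rw [hzre, Complex.norm_real, Real.norm_eq_abs, abs_eq zero_le_one] at h1
        rcases h1 with h1 | h1
        · rw [h1, Complex.ofReal_one] at hzre
          exact absurd ((hmem z).1 hz) (hzre ▸ eval_one_leeYangPoly_ne_zero a hpos)
        · rw [hzre, h1]; simp
      split_ifs with hm
      · rw [card_eq_one]
        refine ⟨-1, ?_⟩
        ext z
        rw [mem_filter, mem_singleton]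
        refine ⟨fun hz => hsub z hz.1 hz.2, ?_⟩
        rintro rfl
        exact ⟨(hmem _).2 hm, by simp⟩
      · rw [card_eq_zero, filter_eq_empty_iff]
        intro z hz him
        exact hm (hsub z hz him ▸ (hmem z).1 hz)
    have hsplit : #R = #{z ∈ R | 0 < z.im} + (#{z ∈ R | z.im < 0} + #{z ∈ R | z.im = 0}) := by
      rw [← card_filter_add_card_filter_not (s := R) (fun z => 0 < z.im)]
      congr 1
      rw [← card_filter_add_card_filter_not (s := {z ∈ R | ¬ 0 < z.im}) (fun z => z.im < 0),
        filter_filter, filter_filter]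
      congr 2
      · refine filter_congr fun z _ => ⟨fun hz => hz.2, fun hz => ⟨hz.not_gt, hz⟩⟩
      · refine filter_congr fun z _ => ⟨fun hz => ?_, fun hz => by simp [hz]⟩
        exact le_antisymm (not_lt.1 hz.1) (not_lt.1 hz.2)
    rw [← card_roots_leeYangPoly h, ← hR, hsplit, hlower, hreal]
    ring

end

/-- The cut weights of the Ising model with coupling `f` on the edge set `E`. -/
noncomputable def cutWeight {V : Type} [DecidableEq V] (E : Finset (Sym2 V)) (f : Sym2 V → ℝ)
    (i j : V) : ℝ :=
  if s(i, j) ∈ E then Real.exp (-2 * f s(i, j)) else 1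

theorem cutWeight_eq_exp {V : Type} [DecidableEq V] (E : Finset (Sym2 V))
    (f : Sym2 V → ℝ) (i j : V) :
    cutWeight E f i j = Real.exp (-2 * if s(i, j) ∈ E then f s(i, j) else 0) := by
  unfold cutWeight
  split_ifs <;> simp

section

variable {V : Type} [Fintype V] [DecidableEq V]

theorem sum_mul_pairProd (E : Finset (Sym2 V)) (f : Sym2 V → ℝ) (σ : V → Bool) :
    ∑ e ∈ E, f e * pairProd σ e = ∑ e ∈ E, f e - 2 * ∑ i with σ i = true,
      ∑ j ∈ univ \ ({i | σ i = true} : Finset V), if s(i, j) ∈ E then f s(i, j) else 0 := by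
  have hcut : ∑ i with σ i = true, ∑ j ∈ univ \ ({i | σ i = true} : Finset V),
      (if s(i, j) ∈ E then f s(i, j) else 0) = ∑ e ∈ E with pairProd σ e = -1, f e := by
    rw [← sum_product', ← sum_filter]
    refine sum_bij (fun p _ => s(p.1, p.2)) ?_ ?_ ?_ (fun _ _ => rfl)
    · rintro ⟨i, j⟩ hp
      simp only [mem_filter, mem_product, mem_sdiff, mem_univ, true_and, Bool.not_eq_true] at hp
      simp [mem_filter, hp, pairProd, spin]
    · rintro ⟨i, j⟩ hp ⟨i', j'⟩ hp' heq
      simp only [mem_filter, mem_product, mem_sdiff, mem_univ, true_and, Bool.not_eq_true]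
        at hp hp'
      rcases Sym2.eq_iff.1 heq with ⟨h1, h2⟩ | ⟨h1, h2⟩
      · exact Prod.ext h1 h2
      · simp only at h1
        simp [h1, hp'.1.2] at hp
    · intro e he
      rw [mem_filter] at he
      obtain ⟨heE, hprod⟩ := he
      induction e using Sym2.ind with
      | _ i j =>
        cases hi : σ i <;> cases hj : σ j
        · norm_num [pairProd, spin, hi, hj] at hprod
        · exact ⟨(j, i), by simp [hi, hj, Sym2.eq_swap (a := j), heE], Sym2.eq_swap⟩
        · exact ⟨(i, j), by simp [hi, hj, heE], rfl⟩
        · norm_num [pairProd, spin, hi, hj] at hprod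
  rw [hcut, sum_filter, mul_sum, ← sum_sub_distrib]
  refine sum_congr rfl fun e _ => ?_
  have : pairProd σ e = -1 ∨ pairProd σ e = 1 := by
    induction e using Sym2.ind with
    | _ i j => cases hi : σ i <;> cases hj : σ j <;> simp [pairProd, spin, hi, hj]
  rcases this with h | h
  · rw [h, if_pos rfl]; ring
  · rw [h, if_neg (by norm_num)]; ring

theorem isConnectedWeight_cutWeight (E : Finset (Sym2 V)) (f : Sym2 V → ℝ)
    (hf : ∀ e ∈ E, 0 ≤ f e)
    (hconn : (SimpleGraph.fromEdgeSet {e : Sym2 V | e ∈ E ∧ 0 < f e}).Connected) :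
    IsConnectedWeight (cutWeight E f) where
  symm i j := by simp only [cutWeight, Sym2.eq_swap]
  nonneg i j := by rw [cutWeight_eq_exp]; exact (Real.exp_pos _).le
  le_one i j := by
    rw [cutWeight]
    split_ifs with h
    · exact Real.exp_le_one_iff.2 (by linarith [hf _ h])
    · exact le_rfl
  eq_univ S := by
    rintro ⟨i, hi⟩ hS
    by_contra hne
    obtain ⟨j, hj⟩ : ∃ j, j ∉ S := by
      by_contra! hall
      exact hne (eq_univ_iff_forall.2 hall)
    obtain ⟨p⟩ := hconn.preconnected i j
    obtain ⟨d, -, hd1, hd2⟩ := p.exists_boundary_dart (S : Set V) (mem_coe.2 hi)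
      (fun h => hj (mem_coe.1 h))
    obtain ⟨⟨hdE, hdpos⟩, -⟩ := (SimpleGraph.fromEdgeSet_adj _).1 d.adj
    have := hS d.fst (mem_coe.1 hd1) d.snd (by simpa using hd2)
    rw [cutWeight, if_pos hdE, Real.exp_eq_one_iff] at this
    linarith

theorem isingZ_eq (E : Finset (Sym2 V)) (J : Sym2 V → ℝ) (u₀ v₀ : V) (hE : s(u₀, v₀) ∈ E)
    (t x : ℝ) (f : Sym2 V → ℝ) (hf : ∀ e, f e = J e + if e = s(u₀, v₀) then t else 0) :
    IsingZ E J u₀ v₀ t x = Complex.exp ((∑ e ∈ E, f e : ℝ) - Fintype.card V * x * Complex.I) *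
      (leeYangPoly (cutWeight E f)).eval (Complex.exp (2 * x * Complex.I)) := by
  rw [eval_leeYangPoly, leeYang, IsingZ, mul_sum]
  refine sum_bij' (fun σ _ => ({i | σ i = true} : Finset V)) (fun S _ i => decide (i ∈ S))
    ?_ ?_ ?_ ?_ ?_
  · intro σ _; simp
  · intro S _; simp
  · intro σ _; ext i; simp
  · intro S _; ext i; simp
  · intro σ _
    have hpair : t * (spin (σ u₀) * spin (σ v₀)) + ∑ e ∈ E, J e * pairProd σ e
        = ∑ e ∈ E, f e * pairProd σ e := by
      simp_rw [hf, add_mul, ite_mul, zero_mul]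
      rw [sum_add_distrib, sum_ite_eq' E, if_pos hE, add_comm]
      rfl
    have hspin : ∑ u, spin (σ u) = 2 * #{i | σ i = true} - Fintype.card V := by
      have : ∀ u, spin (σ u) = 2 * (if σ u = true then 1 else 0) - 1 := fun u => by
        unfold spin; split_ifs <;> norm_num
      simp_rw [this, sum_sub_distrib, ← mul_sum, sum_boole]
      simp
    have hweight : ∏ i with σ i = true, ∏ j ∈ univ \ ({i | σ i = true} : Finset V), cutWeight E f i j
        = Real.exp (-2 * ∑ i with σ i = true, ∑ j ∈ univ \ ({i | σ i = true} : Finset V),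
            if s(i, j) ∈ E then f s(i, j) else 0) := by
      simp_rw [cutWeight_eq_exp, ← Real.exp_sum, ← mul_sum]
    rw [hweight, prod_const, ← Complex.exp_nat_mul, Complex.ofReal_exp, ← Complex.exp_add,
      ← Complex.exp_add, ← Complex.ofReal_mul t, ← Complex.ofReal_add, hpair, hspin,
      sum_mul_pairProd]
    congr 1
    push_cast
    ring

end

end LeeYang

theorem stmt9 {V : Type} [Fintype V] [DecidableEq V]
    (E : Finset (Sym2 V)) (J : Sym2 V → ℝ) (u₀ v₀ : V)
    (hE : s(u₀, v₀) ∈ E)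
    (hferro : ∀ e ∈ E, 0 ≤ J e)
    (hconn : (SimpleGraph.fromEdgeSet {e : Sym2 V | e ∈ E ∧ 0 < J e}).Connected)
    (n : ℕ) (hn : n = Fintype.card V)
    (t : ℝ) (ht : 0 ≤ t) :
    (Even n →
      {z : ℝ | z ∈ Set.Ioo 0 (π / 2) ∧ IsingZ E J u₀ v₀ t z = 0}.encard
          = (n / 2 : ℕ) ∧
        IsingZ E J u₀ v₀ t ((π / 2 : ℝ) : ℂ) ≠ 0) ∧
    (Odd n →
      {z : ℝ | z ∈ Set.Ioo 0 (π / 2) ∧ IsingZ E J u₀ v₀ t z = 0}.encard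
          = ((n - 1) / 2 : ℕ) ∧
        IsingZ E J u₀ v₀ t ((π / 2 : ℝ) : ℂ) = 0) := by
  subst hn
  have : Nonempty V := ⟨u₀⟩
  set f : Sym2 V → ℝ := fun e => J e + if e = s(u₀, v₀) then t else 0
  have hle : ∀ e, J e ≤ f e := fun e => by
    simp only [f]
    split_ifs <;> linarith
  have hweight : IsConnectedWeight (cutWeight E f) :=
    isConnectedWeight_cutWeight E f (fun e he => (hferro e he).trans (hle e))
      (hconn.mono (SimpleGraph.fromEdgeSet_mono fun e he => ⟨he.1, he.2.trans_le (hle e)⟩))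
  have hzero : ∀ x : ℝ, IsingZ E J u₀ v₀ t x = 0 ↔
      (leeYangPoly (cutWeight E f)).eval (Complex.exp (2 * x * Complex.I)) = 0 := fun x => by
    rw [isingZ_eq E J u₀ v₀ hE t x f fun _ => rfl, mul_eq_zero,
      or_iff_right (Complex.exp_ne_zero _)]
  have hhalf : IsingZ E J u₀ v₀ t ((π / 2 : ℝ) : ℂ) = 0 ↔
      (leeYangPoly (cutWeight E f)).eval (-1) = 0 := by
    have : (2 * ((π / 2 : ℝ) : ℂ) * Complex.I) = π * Complex.I := by push_cast; ring
    rw [hzero, this, Complex.exp_pi_mul_I]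
  obtain ⟨k, hk, hcard⟩ := exists_encard_angle_leeYangPoly hweight fun i j => by
    rw [cutWeight_eq_exp]
    exact Real.exp_pos _
  simp only [ne_eq, hzero] at hhalf ⊢
  rw [hk, hcard]
  by_cases hm : (leeYangPoly (cutWeight E f)).eval (-1) = 0
  · rw [if_pos hm]
    refine ⟨fun heven => absurd heven (by simp [parity_simps]), fun _ => ⟨?_, hhalf.2 hm⟩⟩
    congr 1
    omega
  · rw [if_neg hm]
    refine ⟨fun _ => ⟨?_, fun h => hm (hhalf.1 h)⟩, fun hodd => absurd hodd (by simp)⟩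
    congr 1
    omega
end

section
/- Suppose that n is even, that J is ferromagnetic, and that the subgraph G_{>0} is connected. Let x_1, …, x_{n/2} : [0,∞) → ℝ be continuous functions such that for every t ≥ 0 one has 0 < x_1(t) < … < x_{n/2}(t) < π/2 and {x ∈ (0,π/2) : Z_{G,t}(x) = 0} = {x_1(t), …, x_{n/2}(t)}. Set y_k(t) := sin²x_k(t), y_0(0) := 0 and y_{n/2+1}(0) := 1. Then for each fixed s ∈ (0,∞) and each k ∈ {1, …, n/2}, exactly one of the following three cases occurs: (a) y_k(t) = y_k(0) for every t ∈ [0,s]; (b) y_k(s) ∈ (y_{k−1}(0), y_k(0)) and y_k(t) ∈ (y_k(s), y_k(0)) for every t ∈ (0,s); (c) y_k(s) ∈ (y_k(0), y_{k+1}(0)) and y_k(t) ∈ (y_k(0), y_k(s)) for every t ∈ (0,s). -/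
open scoped Real

/-- Exactly one of three propositions holds. -/
def ExactlyOne (A B C : Prop) : Prop :=
  (A ∧ ¬B ∧ ¬C) ∨ (¬A ∧ B ∧ ¬C) ∨ (¬A ∧ ¬B ∧ C)

/-- Splitting the partition function according to whether the spins at `u₀` and `v₀` agree. -/
lemma IsingZ_eq_exp_add_exp {V : Type} [Fintype V] [DecidableEq V]
    (E : Finset (Sym2 V)) (J : Sym2 V → ℝ) (u₀ v₀ : V) (z : ℂ) :
    ∃ A B : ℂ, ∀ t : ℂ, IsingZ E J u₀ v₀ t z = Complex.exp t * A + Complex.exp (-t) * B := by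
  let w : (V → Bool) → ℂ := fun σ =>
    Complex.exp (((∑ e ∈ E, J e * pairProd σ e : ℝ) : ℂ)
      + Complex.I * z * ((∑ u, spin (σ u) : ℝ) : ℂ))
  refine ⟨∑ σ : V → Bool, if σ u₀ = σ v₀ then w σ else 0,
    ∑ σ : V → Bool, if σ u₀ = σ v₀ then 0 else w σ, fun t => ?_⟩
  rw [IsingZ, Finset.mul_sum, Finset.mul_sum, ← Finset.sum_add_distrib]
  refine Finset.sum_congr rfl fun σ _ => ?_
  rw [add_assoc, Complex.exp_add]
  cases h₁ : σ u₀ <;> cases h₂ : σ v₀ <;> simp [spin, w]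

/-- A field value that is a zero at two different real couplings is a zero at every coupling. -/
lemma IsingZ_eq_zero_of_ne {V : Type} [Fintype V] [DecidableEq V]
    {E : Finset (Sym2 V)} {J : Sym2 V → ℝ} {u₀ v₀ : V} {z : ℂ} {t t' : ℝ} (hne : t ≠ t')
    (ht : IsingZ E J u₀ v₀ t z = 0) (ht' : IsingZ E J u₀ v₀ t' z = 0) (r : ℂ) :
    IsingZ E J u₀ v₀ r z = 0 := by
  obtain ⟨A, B, hAB⟩ := IsingZ_eq_exp_add_exp E J u₀ v₀ z
  have key : ∀ r : ℝ, IsingZ E J u₀ v₀ r z = 0 → Complex.exp ((2 * r : ℝ) : ℂ) * A + B = 0 := by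
    intro r hr
    have hexp : Complex.exp ((2 * r : ℝ) : ℂ) = Complex.exp r * Complex.exp r := by
      rw [← Complex.exp_add]; push_cast; ring_nf
    have hinv : Complex.exp r * Complex.exp (-r) = 1 := by rw [← Complex.exp_add]; simp
    rw [hAB] at hr
    rw [hexp]
    linear_combination Complex.exp r * hr - B * hinv
  have h₁ := key t ht
  have h₂ := key t' ht'
  have hA : A = 0 := by
    have hmul : (Complex.exp ((2 * t : ℝ) : ℂ) - Complex.exp ((2 * t' : ℝ) : ℂ)) * A = 0 := by
      linear_combination h₁ - h₂
    refine (mul_eq_zero.mp hmul).resolve_left fun h => hne ?_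
    rw [sub_eq_zero, ← Complex.ofReal_exp, ← Complex.ofReal_exp, Complex.ofReal_inj,
      Real.exp_eq_exp] at h
    linarith
  have hB : B = 0 := by simpa [hA] using h₁
  rw [hAB, hA, hB]
  simp

/-- If one of finitely many continuous functions, pairwise distinct at each time, attains the value
`c` at every time of a preconnected closed set, then it is always the same function. -/
lemma eqOn_const_of_forall_exists_eq {ι : Type*} {I : Finset ι} {x : ι → ℝ → ℝ} {S : Set ℝ}
    (hS : IsPreconnected S) (hSc : IsClosed S)
    (hcont : ∀ k ∈ I, ContinuousOn (x k) S)
    (hinj : ∀ t ∈ S, Set.InjOn (fun k => x k t) I)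
    {c : ℝ} (hc : ∀ t ∈ S, ∃ j ∈ I, x j t = c)
    {k : ι} (hk : k ∈ I) {t₀ : ℝ} (ht₀ : t₀ ∈ S) (hkt₀ : x k t₀ = c) :
    ∀ t ∈ S, x k t = c := by
  classical
  intro t ht
  by_contra hne
  have hclosed : ∀ j ∈ I, IsClosed (S ∩ x j ⁻¹' {c}) := fun j hj =>
    (hcont j hj).preimage_isClosed_of_isClosed hSc isClosed_singleton
  obtain ⟨j, hj, hjt⟩ := hc t ht
  have hjk : j ≠ k := by rintro rfl; exact hne hjt
  obtain ⟨r, hr, ⟨-, hkr⟩, hr'⟩ := isPreconnected_closed_iff.mp hS (S ∩ x k ⁻¹' {c})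
    (⋃ i ∈ I.erase k, S ∩ x i ⁻¹' {c}) (hclosed k hk)
    (isClosed_biUnion_finset fun i hi => hclosed i (Finset.mem_of_mem_erase hi))
    (fun r hr => by
      obtain ⟨i, hi, hir⟩ := hc r hr
      by_cases hik : i = k
      · exact Or.inl ⟨hr, hik ▸ hir⟩
      · exact Or.inr (Set.mem_biUnion (Finset.mem_erase.mpr ⟨hik, hi⟩) ⟨hr, hir⟩))
    ⟨t₀, ht₀, ht₀, hkt₀⟩
    ⟨t, ht, Set.mem_biUnion (Finset.mem_erase.mpr ⟨hjk, hj⟩) ⟨ht, hjt⟩⟩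
  obtain ⟨i, hi, -, hir⟩ := Set.mem_iUnion₂.mp hr'
  obtain ⟨hik, hi⟩ := Finset.mem_erase.mp hi
  exact hik (hinj r hr hi hk (hir.trans hkr.symm))

/-- A continuous function on `[0, s]` that, whenever it takes a value twice, is constant, is
constant, strictly increasing or strictly decreasing. -/
lemma const_or_strictMonoOn_or_strictAntiOn {f : ℝ → ℝ} {s : ℝ} (hs : 0 < s)
    (hf : ContinuousOn f (Set.Icc 0 s))
    (hconst : ∀ t ∈ Set.Icc 0 s, ∀ t' ∈ Set.Icc 0 s, t ≠ t' → f t = f t' →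
      ∀ r ∈ Set.Icc 0 s, f r = f t) :
    (∀ r ∈ Set.Icc 0 s, f r = f 0) ∨ StrictMonoOn f (Set.Icc 0 s) ∨
      StrictAntiOn f (Set.Icc 0 s) := by
  by_cases hinj : Set.InjOn f (Set.Icc 0 s)
  · exact Or.inr (hf.strictMonoOn_of_injOn_Icc' hs.le hinj)
  · left
    simp only [Set.InjOn, not_forall] at hinj
    obtain ⟨t, ht, t', ht', heq, hne⟩ := hinj
    intro r hr
    rw [hconst t ht t' ht' hne heq r hr, hconst t ht t' ht' hne heq 0 ⟨le_rfl, hs.le⟩]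

/-- A continuous function on `[0, s]` avoiding a value above its initial value stays below it. -/
lemma lt_of_forall_ne_of_lt {f : ℝ → ℝ} {s c : ℝ} (hs : 0 ≤ s) (hf : ContinuousOn f (Set.Icc 0 s))
    (hne : ∀ t ∈ Set.Icc 0 s, f t ≠ c) (h0 : f 0 < c) : f s < c := by
  by_contra! h
  obtain ⟨t, ht, htc⟩ := intermediate_value_Icc hs hf ⟨h0.le, h⟩
  exact hne t ht htc

lemma sin_sq_strictMonoOn : StrictMonoOn (fun a : ℝ => Real.sin a ^ 2) (Set.Ioo 0 (π / 2)) := by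
  intro a ha b hb hab
  have h₁ := Real.sin_pos_of_pos_of_lt_pi ha.1 (by linarith [ha.2, Real.pi_pos])
  have h₂ := Real.sin_lt_sin_of_lt_of_le_pi_div_two (by linarith [ha.1, Real.pi_pos]) hb.2.le hab
  exact pow_lt_pow_left₀ h₂ h₁.le two_ne_zero

theorem stmt11 {V : Type} [Fintype V] [DecidableEq V]
    (E : Finset (Sym2 V)) (J : Sym2 V → ℝ) (u₀ v₀ : V)
    (hE : s(u₀, v₀) ∈ E)
    (hferro : ∀ e ∈ E, 0 ≤ J e)
    (hconn : (SimpleGraph.fromEdgeSet {e : Sym2 V | e ∈ E ∧ 0 < J e}).Connected)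
    (n : ℕ) (hn : n = Fintype.card V) (heven : Even n)
    (x : ℕ → ℝ → ℝ)
    (hcont : ∀ k ∈ Finset.Icc 1 (n / 2), ContinuousOn (x k) (Set.Ici 0))
    (hzeros : ∀ t : ℝ, 0 ≤ t →
      (∀ k ∈ Finset.Icc 1 (n / 2), 0 < x k t ∧ x k t < π / 2) ∧
      (∀ k, 1 ≤ k → k < n / 2 → x k t < x (k + 1) t) ∧
      {z : ℝ | z ∈ Set.Ioo 0 (π / 2) ∧ IsingZ E J u₀ v₀ t z = 0}
        = (fun k => x k t) '' Set.Icc 1 (n / 2)) :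
    ∀ s : ℝ, 0 < s → ∀ k ∈ Finset.Icc 1 (n / 2),
      ExactlyOne
        (∀ t : ℝ, t ∈ Set.Icc 0 s → Real.sin (x k t) ^ 2 = Real.sin (x k 0) ^ 2)
        (Real.sin (x k s) ^ 2
            ∈ Set.Ioo (if k = 1 then 0 else Real.sin (x (k - 1) 0) ^ 2)
                (Real.sin (x k 0) ^ 2) ∧
          ∀ t : ℝ, t ∈ Set.Ioo 0 s →
            Real.sin (x k t) ^ 2
              ∈ Set.Ioo (Real.sin (x k s) ^ 2) (Real.sin (x k 0) ^ 2))
        (Real.sin (x k s) ^ 2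
            ∈ Set.Ioo (Real.sin (x k 0) ^ 2)
                (if k = n / 2 then 1 else Real.sin (x (k + 1) 0) ^ 2) ∧
          ∀ t : ℝ, t ∈ Set.Ioo 0 s →
            Real.sin (x k t) ^ 2
              ∈ Set.Ioo (Real.sin (x k 0) ^ 2) (Real.sin (x k s) ^ 2)) := by
  intro s hs k hk
  have hmem : ∀ {t : ℝ}, 0 ≤ t → ∀ {j}, j ∈ Finset.Icc 1 (n / 2) → x j t ∈ Set.Ioo 0 (π / 2) :=
    fun ht j hj => (hzeros _ ht).1 j hj
  have hlt : ∀ t : ℝ, 0 ≤ t → StrictMonoOn (fun j => x j t) (Finset.Icc 1 (n / 2)) := by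
    intro t ht
    rw [Finset.coe_Icc]
    refine strictMonoOn_of_lt_add_one Set.ordConnected_Icc fun j _ hj hj' => ?_
    exact (hzeros t ht).2.1 j hj.1 hj'.2
  have hzero : ∀ t : ℝ, 0 ≤ t → ∀ j ∈ Finset.Icc 1 (n / 2), IsingZ E J u₀ v₀ t (x j t) = 0 := by
    intro t ht j hj
    have hjt : x j t ∈ (fun i => x i t) '' Set.Icc 1 (n / 2) := ⟨j, Finset.mem_Icc.mp hj, rfl⟩
    rw [← (hzeros t ht).2.2] at hjt
    exact hjt.2
  have hpersist : ∀ i ∈ Finset.Icc 1 (n / 2), ∀ j ∈ Finset.Icc 1 (n / 2), ∀ t t' : ℝ,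
      0 ≤ t → 0 ≤ t' → t ≠ t' → x i t = x j t' → ∀ r ∈ Set.Ici (0 : ℝ), x i r = x i t := by
    intro i hi j hj t t' ht ht' hne heq
    refine eqOn_const_of_forall_exists_eq isPreconnected_Ici isClosed_Ici hcont
      (fun r hr => (hlt r hr).injOn) (fun r hr => ?_) hi (Set.mem_Ici.mpr ht) rfl
    have hz : x i t ∈ {z : ℝ | z ∈ Set.Ioo 0 (π / 2) ∧ IsingZ E J u₀ v₀ r z = 0} :=
      ⟨hmem ht hi, IsingZ_eq_zero_of_ne hne (hzero t ht i hi) (heq ▸ hzero t' ht' j hj) r⟩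
    rw [(hzeros r hr).2.2] at hz
    obtain ⟨l, hl, hlr⟩ := hz
    exact ⟨l, Finset.mem_Icc.mpr hl, hlr⟩
  have hcross : ∀ j ∈ Finset.Icc 1 (n / 2), j ≠ k → ∀ t ∈ Set.Icc 0 s, x k t ≠ x j 0 := by
    intro j hj hjk t ht heq
    have h0 : x k 0 = x j 0 := by
      rcases eq_or_ne t 0 with rfl | hne
      · exact heq
      · rw [← heq]
        exact hpersist k hk j hj t 0 ht.1 le_rfl hne heq 0 Set.self_mem_Ici
    exact hjk ((hlt 0 le_rfl).injOn hj hk h0.symm)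
  have hf : ContinuousOn (x k) (Set.Icc 0 s) := (hcont k hk).mono Set.Icc_subset_Ici_self
  have hsin : ∀ {i j : ℕ} {t t' : ℝ}, i ∈ Finset.Icc 1 (n / 2) → j ∈ Finset.Icc 1 (n / 2) →
      0 ≤ t → 0 ≤ t' → x i t < x j t' → Real.sin (x i t) ^ 2 < Real.sin (x j t') ^ 2 :=
    fun hi hj ht ht' h => sin_sq_strictMonoOn (hmem ht hi) (hmem ht' hj) h
  obtain ⟨hk1, hk2⟩ := Finset.mem_Icc.mp hk
  have hlower : (if k = 1 then 0 else Real.sin (x (k - 1) 0) ^ 2) < Real.sin (x k s) ^ 2 := by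
    split_ifs with h
    · have := hmem hs.le hk
      exact pow_pos (Real.sin_pos_of_pos_of_lt_pi this.1 (by linarith [this.2, Real.pi_pos])) 2
    · have hj : k - 1 ∈ Finset.Icc 1 (n / 2) := Finset.mem_Icc.mpr (by omega)
      refine hsin hj hk le_rfl hs.le (neg_lt_neg_iff.mp ?_)
      refine lt_of_forall_ne_of_lt (f := fun t => -x k t) hs.le hf.neg (fun t ht heq => ?_)
        (neg_lt_neg (hlt 0 le_rfl hj hk (by omega)))
      exact hcross _ hj (by omega) t ht (neg_inj.mp heq)
  have hupper : Real.sin (x k s) ^ 2 <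
      (if k = n / 2 then 1 else Real.sin (x (k + 1) 0) ^ 2) := by
    split_ifs with h
    · have hx := hmem hs.le hk
      have hcos := Real.cos_pos_of_mem_Ioo ⟨by linarith [hx.1, Real.pi_pos], hx.2⟩
      nlinarith [Real.sin_sq_add_cos_sq (x k s)]
    · have hj : k + 1 ∈ Finset.Icc 1 (n / 2) := Finset.mem_Icc.mpr (by omega)
      exact hsin hk hj hs.le le_rfl (lt_of_forall_ne_of_lt hs.le hf (hcross _ hj (by omega))
        (hlt 0 le_rfl hk hj (by omega)))
  have h0s : (0 : ℝ) ∈ Set.Icc 0 s := ⟨le_rfl, hs.le⟩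
  have hss : s ∈ Set.Icc 0 s := ⟨hs.le, le_rfl⟩
  rcases const_or_strictMonoOn_or_strictAntiOn hs hf (fun t ht t' ht' hne heq r hr =>
    hpersist k hk k hk t t' ht.1 ht'.1 hne heq r hr.1) with h | h | h
  · have hs0 : Real.sin (x k s) ^ 2 = Real.sin (x k 0) ^ 2 := by rw [h s hss]
    exact Or.inl ⟨fun t ht => by rw [h t ht], fun hb => hb.1.2.ne hs0, fun hc => hc.1.1.ne' hs0⟩
  · have hs0 := hsin hk hk le_rfl hs.le (h h0s hss hs)
    refine Or.inr (Or.inr ⟨fun ha => hs0.ne' (ha s hss), fun hb => hb.1.2.not_gt hs0,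
      ⟨hs0, hupper⟩, fun t ht => ?_⟩)
    have hts := Set.Ioo_subset_Icc_self ht
    exact ⟨hsin hk hk le_rfl ht.1.le (h h0s hts ht.1), hsin hk hk ht.1.le hs.le (h hts hss ht.2)⟩
  · have hs0 := hsin hk hk hs.le le_rfl (h h0s hss hs)
    refine Or.inr (Or.inl ⟨fun ha => hs0.ne (ha s hss), ⟨⟨hlower, hs0⟩, fun t ht => ?_⟩,
      fun hc => hc.1.1.not_gt hs0⟩)
    have hts := Set.Ioo_subset_Icc_self ht
    exact ⟨hsin hk hk hs.le ht.1.le (h hts hss ht.2), hsin hk hk ht.1.le le_rfl (h h0s hts ht.1)⟩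
end
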